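/- arXiv:2206.00503 — 9 statements merged into one kernel-verified Lean document; each statement's English description precedes it below -/
import Mathlib

section
/- Let N ≥ 2 and r ≥ 1 be integers. Suppose A and B are complex symmetric (N+1)×(N+1) matrices such that rank(a•A + b•B) = 2r for every pair (a,b) ∈ ℂ² with (a,b) ≠ (0,0), and suppose the pencil is non-degenerate, i.e. ker A ∩ ker B = {0} and the column spaces of A and B together span ℂ^{N+1}. Then 2r ≤ N and N ≤ 3r − 1. -/
open Matrix

/-- A non-degenerate pencil of complex symmetric `(N+1) × (N+1)` matrices
of constant rank `2r` exists only if `2r ≤ N ≤ 3r - 1`. -/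
theorem pencil_constant_rank_size_bounds
    (N r : ℕ) (hN : 2 ≤ N) (hr : 1 ≤ r)
    (A B : Matrix (Fin (N + 1)) (Fin (N + 1)) ℂ)
    (hAsymm : A.IsSymm) (hBsymm : B.IsSymm)
    (hrank : ∀ a b : ℂ, ¬(a = 0 ∧ b = 0) → (a • A + b • B).rank = 2 * r)
    (hker : ∀ v : Fin (N + 1) → ℂ, A.mulVec v = 0 → B.mulVec v = 0 → v = 0)
    (hspan : LinearMap.range A.mulVecLin ⊔ LinearMap.range B.mulVecLin = ⊤) :
    2 * r ≤ N ∧ N ≤ 3 * r - 1 := by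
  have hA : A.rank = 2 * r := by simpa using hrank 1 0 (by simp)
  have hB : B.rank = 2 * r := by simpa using hrank 0 1 (by simp)
  have hAB : (A + B).rank = 2 * r := by simpa using hrank 1 1 (by simp)
  have hle : 2 * r ≤ N + 1 := by
    rw [← hA]; simpa using A.rank_le_width
  constructor
  · by_contra hlt
    have h2 : 2 * r = N + 1 := by omega
    have hunit : ∀ M : Matrix (Fin (N + 1)) (Fin (N + 1)) ℂ, M.rank = 2 * r →
        Function.Injective M.mulVecLin := by
      intro M hM
      rw [LinearMap.injective_iff_surjective, ← LinearMap.range_eq_top]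
      apply Submodule.eq_top_of_finrank_eq
      have : Module.finrank ℂ (LinearMap.range M.mulVecLin) = 2 * r := hM
      rw [this, h2]; simp
    let e := LinearEquiv.ofInjectiveEndo B.mulVecLin (hunit B hB)
    obtain ⟨μ, hμ⟩ := Module.End.exists_eigenvalue
      (e.symm.toLinearMap ∘ₗ A.mulVecLin : Module.End ℂ (Fin (N + 1) → ℂ))
    obtain ⟨v, hv⟩ := hμ.exists_hasEigenvector
    have h3 : e.symm (A.mulVecLin v) = μ • v := hv.apply_eq_smul
    rw [LinearEquiv.symm_apply_eq, map_smul] at h3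
    have h4 : A *ᵥ v = μ • (B *ᵥ v) := h3
    have h5 := hunit _ (hrank 1 (-μ) (by simp))
    apply hv.2
    apply h5
    simp [Matrix.add_mulVec, Matrix.neg_mulVec, Matrix.smul_mulVec, h4]
  · have hk : Module.finrank ℂ (LinearMap.range B.mulVecLin)
        + Module.finrank ℂ (LinearMap.ker B.mulVecLin) = N + 1 := by
      rw [LinearMap.finrank_range_add_finrank_ker]; simp
    have hB' : Module.finrank ℂ (LinearMap.range B.mulVecLin) = 2 * r := hB
    have hA' : Module.finrank ℂ (LinearMap.range A.mulVecLin) = 2 * r := hA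
    have hAB' : Module.finrank ℂ (LinearMap.range (A + B).mulVecLin) = 2 * r := hAB
    have hs := Submodule.finrank_sup_add_finrank_inf_eq
      (LinearMap.range A.mulVecLin) (LinearMap.range (A + B).mulVecLin)
    have htop : LinearMap.range A.mulVecLin ⊔ LinearMap.range (A + B).mulVecLin = ⊤ := by
      rw [eq_top_iff, ← hspan]
      refine sup_le le_sup_left ?_
      rintro _ ⟨w, rfl⟩
      have : B.mulVecLin w = A.mulVecLin (-w) + (A + B).mulVecLin w := by
        simp [Matrix.add_mulVec, Matrix.mulVec_neg]
      rw [this]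
      exact Submodule.add_mem_sup ⟨_, rfl⟩ ⟨_, rfl⟩
    rw [htop, finrank_top, Module.finrank_fin_fun, hA', hAB'] at hs
    have hinj : Function.Injective (A.mulVecLin.domRestrict (LinearMap.ker B.mulVecLin)) := by
      rw [injective_iff_map_eq_zero]
      rintro ⟨v, hv⟩ h
      exact Subtype.ext (hker v h hv)
    have h1 := LinearMap.finrank_range_of_inj hinj
    have h2 : LinearMap.range (A.mulVecLin.domRestrict (LinearMap.ker B.mulVecLin)) ≤
        LinearMap.range A.mulVecLin ⊓ LinearMap.range (A + B).mulVecLin := by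
      rintro _ ⟨⟨v, hv⟩, rfl⟩
      refine ⟨⟨v, rfl⟩, ⟨v, ?_⟩⟩
      have hv' : B *ᵥ v = 0 := hv
      simp [Matrix.add_mulVec, hv']
    have h3 := Submodule.finrank_mono h2
    omega
end

section
/- Let A and B be complex symmetric (N+1)×(N+1) matrices and let k be a natural number such that rank(a•A + b•B) = k for every pair (a,b) ∈ ℂ² with (a,b) ≠ (0,0). Then k is even. -/
open Matrix

lemma pcr_sel {n k : ℕ} (M : Matrix (Fin n) (Fin k) ℂ) (r : ℕ) (h : M.rank = r) :
    ∃ f : Fin r → Fin n, LinearIndependent ℂ (fun i => M (f i)) ∧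
      Submodule.span ℂ (Set.range (fun i => M (f i))) = Submodule.span ℂ (Set.range M.row) := by
  subst h
  rw [Matrix.rank_eq_finrank_span_row]
  obtain ⟨f, hf, hs, hl⟩ := Submodule.exists_fun_fin_finrank_span_eq ℂ (Set.range M.row)
  choose g hg using hf
  have : (fun i => M (g i)) = f := funext hg
  exact ⟨g, by rw [this]; exact hl, by rw [this]; exact hs⟩

lemma pcr_selD {n k : ℕ} (M : Matrix (Fin n) (Fin k) ℂ) (h : M.rank = k) :
    ∃ f : Fin k → Fin n, (M.submatrix f id).det ≠ 0 := by
  obtain ⟨f, hf, -⟩ := pcr_sel M k h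
  refine ⟨f, ?_⟩
  have : IsUnit (M.submatrix f id) := Matrix.linearIndependent_rows_iff_isUnit.1 hf
  exact ((Matrix.isUnit_iff_isUnit_det _).1 this).ne_zero

lemma pcr_fac {n k : ℕ} (S : Matrix (Fin n) (Fin n) ℂ) (h : S.rank = k) :
    ∃ (X : Matrix (Fin n) (Fin k) ℂ) (Y : Matrix (Fin k) (Fin n) ℂ),
      S = X * Y ∧ X.rank = k ∧ Y.rank = k := by
  obtain ⟨f, hf, hs⟩ := pcr_sel S k h
  have : ∀ i, ∃ c : Fin k → ℂ, ∑ j, c j • S (f j) = S i := by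
    intro i
    rw [← Submodule.mem_span_range_iff_exists_fun, hs]
    exact Submodule.subset_span ⟨i, rfl⟩
  choose c hc using this
  have e : S = (Matrix.of c) * (S.submatrix f id) := by
    ext i j
    rw [← hc i]
    simp [Matrix.mul_apply]
  refine ⟨Matrix.of c, S.submatrix f id, e, ?_, ?_⟩
  · apply le_antisymm (Matrix.rank_le_width _)
    conv_lhs => rw [← h, e]
    exact Matrix.rank_mul_le_left _ _
  · apply le_antisymm (Matrix.rank_le_height _)
    conv_lhs => rw [← h, e]
    exact Matrix.rank_mul_le_right _ _

lemma pcr_sym {n k : ℕ} (S : Matrix (Fin n) (Fin n) ℂ) (hS : S.IsSymm) (h : S.rank = k) :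
    (∀ I J : Fin k → Fin n, (S.submatrix I J).det ^ 2 =
      (S.submatrix I I).det * (S.submatrix J J).det) ∧
    ∃ I : Fin k → Fin n, (S.submatrix I I).det ≠ 0 := by
  obtain ⟨X, Y, e, hX, hY⟩ := pcr_fac S h
  have key : ∀ I J : Fin k → Fin n, (S.submatrix I J).det =
      (X.submatrix I id).det * (Y.submatrix id J).det := by
    intro I J
    rw [← Matrix.det_mul, e]
    rfl
  have sy : ∀ I J : Fin k → Fin n, (S.submatrix I J).det = (S.submatrix J I).det := by
    intro I J
    rw [← Matrix.det_transpose, Matrix.transpose_submatrix, hS.eq]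
  have p1 : ∀ I J : Fin k → Fin n, (S.submatrix I J).det ^ 2 =
      (S.submatrix I I).det * (S.submatrix J J).det := by
    intro I J
    rw [sq]
    nth_rewrite 2 [sy]
    simp only [key]
    ring
  refine ⟨p1, ?_⟩
  obtain ⟨I, hI⟩ := pcr_selD X hX
  obtain ⟨J, hJ⟩ := pcr_selD Yᵀ (by rw [Matrix.rank_transpose, hY])
  refine ⟨I, fun h0 => ?_⟩
  have h1 := p1 I J
  rw [h0, zero_mul, key] at h1
  have hJ' : (Y.submatrix id J).det ≠ 0 := by
    rw [← Matrix.det_transpose]; exact hJ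
  exact pow_ne_zero 2 (mul_ne_zero hI hJ') h1

/-- If a pencil of complex symmetric matrices has constant rank `k`,
then `k` is even. -/
theorem pencil_constant_rank_even
    (N k : ℕ)
    (A B : Matrix (Fin (N + 1)) (Fin (N + 1)) ℂ)
    (hAsymm : A.IsSymm) (hBsymm : B.IsSymm)
    (hrank : ∀ a b : ℂ, ¬(a = 0 ∧ b = 0) → (a • A + b • B).rank = k) :
    Even k := by
  have hB : B.rank = k := by simpa using hrank 0 1 (by simp)
  have hT : ∀ t : ℂ, (t • B + A).rank = k := fun t => by
    simpa [add_comm] using hrank 1 t (by simp)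
  have hsym : ∀ t : ℂ, (t • B + A).IsSymm := fun t => (hBsymm.smul t).add hAsymm
  obtain ⟨I, hI⟩ := (pcr_sym B hBsymm hB).2
  let P : (Fin k → Fin (N+1)) → (Fin k → Fin (N+1)) → Polynomial ℂ := fun I J =>
    det ((Polynomial.X : Polynomial ℂ) • (B.submatrix I J).map Polynomial.C
      + (A.submatrix I J).map Polynomial.C)
  have hev : ∀ I J t, (P I J).eval t = ((t • B + A).submatrix I J).det := by
    intro I J t
    rw [← Polynomial.coe_evalRingHom, RingHom.map_det]
    congr 1
    ext i j
    simp
    exact mul_comm _ _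
  have hP : ∀ I J, (P I J) ^ 2 = P I I * P J J := by
    intro I J
    apply Polynomial.funext
    intro t
    rw [Polynomial.eval_pow, Polynomial.eval_mul, hev, hev, hev]
    exact (pcr_sym _ (hsym t) (hT t)).1 I J
  have hc : (P I I).coeff k = (B.submatrix I I).det := by
    simpa using Polynomial.coeff_det_X_add_C_card (B.submatrix I I) (A.submatrix I I)
  have hd : (P I I).natDegree = k := by
    apply le_antisymm
    · simpa using Polynomial.natDegree_det_X_add_C_le (B.submatrix I I) (A.submatrix I I)
    · exact Polynomial.le_natDegree_of_ne_zero (by rw [hc]; exact hI)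
  have h0 : P I I ≠ 0 := fun h => hI (by rw [← hc, h, Polynomial.coeff_zero])
  rw [← hd, (IsAlgClosed.splits (P I I)).natDegree_eq_card_roots,
    ← Multiset.toFinset_sum_count_eq]
  refine Finset.even_sum _ fun t _ => ?_
  rw [Polynomial.count_roots]
  obtain ⟨J, hJ⟩ := (pcr_sym _ (hsym t) (hT t)).2
  rw [← hev] at hJ
  have hJ0 : P J J ≠ 0 := fun h => hJ (by rw [h, Polynomial.eval_zero])
  have hm := Polynomial.rootMultiplicity_mul (x := t) (mul_ne_zero h0 hJ0)
  rw [Polynomial.rootMultiplicity_eq_zero (p := P J J) hJ, ← hP I J, sq,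
    Polynomial.rootMultiplicity_mul (by rw [← sq, hP]; exact mul_ne_zero h0 hJ0)] at hm
  exact ⟨_, by simpa using hm.symm⟩
end

section
/- Let N ≥ 2 and r ≥ 1 be integers, and let A and B be complex symmetric (N+1)×(N+1) matrices such that rank(a•A + b•B) = 2r for every (a,b) ∈ ℂ² \ {(0,0)}, with ker A ∩ ker B = {0} and the column spaces of A and B together spanning ℂ^{N+1}. Then, with h = N + 1 − 2r, there exist integers 1 ≤ r₁ ≤ r₂ ≤ … ≤ r_h with r₁ + … + r_h = r and an invertible complex (N+1)×(N+1) matrix P such that the ℂ-linear span of {PᵀAP, PᵀBP} equals the ℂ-linear span of {𝒜, ℬ}, where 𝒜 and ℬ are the canonical matrices associated to the partition (r₁,…,r_h). -/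
open Matrix

/-- Index type of the canonical pencil associated to the partition `rr`:
pairs `(i, p)` with `i : Fin h` and `0 ≤ p ≤ 2 rᵢ`. -/
abbrev PencilIdx (h : ℕ) (rr : Fin h → ℕ) := (i : Fin h) × Fin (2 * rr i + 1)

/-- The first canonical matrix `𝒜` of the pencil `L_{(r₁,…,r_h)}`. -/
def canA (h : ℕ) (rr : Fin h → ℕ) : Matrix (PencilIdx h rr) (PencilIdx h rr) ℂ :=
  Matrix.of fun u v =>
    if u.1 = v.1 ∧
        (((v.2 : ℕ) = (u.2 : ℕ) + rr u.1 ∧ (u.2 : ℕ) < rr u.1) ∨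
         ((u.2 : ℕ) = (v.2 : ℕ) + rr u.1 ∧ (v.2 : ℕ) < rr u.1)) then 1 else 0

/-- The second canonical matrix `ℬ` of the pencil `L_{(r₁,…,r_h)}`. -/
def canB (h : ℕ) (rr : Fin h → ℕ) : Matrix (PencilIdx h rr) (PencilIdx h rr) ℂ :=
  Matrix.of fun u v =>
    if u.1 = v.1 ∧
        (((v.2 : ℕ) = (u.2 : ℕ) + rr u.1 + 1 ∧ (u.2 : ℕ) < rr u.1) ∨
         ((u.2 : ℕ) = (v.2 : ℕ) + rr u.1 + 1 ∧ (v.2 : ℕ) < rr u.1)) then 1 else 0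

open Module

def LIx {ι W : Type} [Fintype ι] [AddCommGroup W] [Module ℂ W] (r : ι → ℕ) (w : ι → ℕ → W) : Prop :=
  ∀ c : ι → ℕ → ℂ, ∑ i, ∑ p ∈ Finset.range (r i), c i p • w i p = 0 → ∀ i, ∀ p < r i, c i p = 0

def SPx {ι W : Type} [Fintype ι] [AddCommGroup W] [Module ℂ W] (r : ι → ℕ) (w : ι → ℕ → W) : Prop :=
  ∀ v : W, ∃ c : ι → ℕ → ℂ, v = ∑ i, ∑ p ∈ Finset.range (r i), c i p • w i p

theorem chain_exists (n : ℕ) : ∀ (W Z : Type) [AddCommGroup W] [Module ℂ W] [AddCommGroup Z]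
    [Module ℂ Z] [FiniteDimensional ℂ W] [FiniteDimensional ℂ Z] (a b : W →ₗ[ℂ] Z),
    finrank ℂ Z = n → Function.Injective a → (∀ (t : ℂ) w, b w = t • a w → w = 0) →
    ∃ (ι : Type) (_ : Fintype ι) (r : ι → ℕ) (w : ι → ℕ → W) (z : ι → ℕ → Z),
      (∀ i p, p < r i → a (w i p) = z i p ∧ b (w i p) = z i (p + 1)) ∧
      LIx r w ∧ SPx r w ∧ LIx (fun i => r i + 1) z ∧ SPx (fun i => r i + 1) z := by
  induction n using Nat.strong_induction_on with
  | _ n ih =>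
  intro W Z _ _ _ _ _ _ a b hn ha hb
  by_cases hW : finrank ℂ W < n
  · -- reduction step
    let W' : Submodule ℂ W := Submodule.comap b (LinearMap.range a)
    let e := LinearEquiv.ofInjective a ha
    have he : ∀ y : LinearMap.range a, a (e.symm y) = y := fun y => by
      have := LinearEquiv.apply_symm_apply e y
      exact congrArg Subtype.val this
    let b' : W' →ₗ[ℂ] W := e.symm.toLinearMap ∘ₗ
      (LinearMap.codRestrict (LinearMap.range a) (b ∘ₗ W'.subtype) (fun c => c.2))
    have hb' : ∀ x : W', a (b' x) = b x := fun x => he _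
    obtain ⟨ι, _, r, w, z, h1, h2, h3, h4, h5⟩ := ih (finrank ℂ W) hW W' W W'.subtype b' rfl
      (Submodule.subtype_injective _) (by
        intro t w h
        have : b w = t • a w := by rw [← hb', h]; simp
        exact Subtype.ext (hb t w this))
    let q := (LinearMap.range a).mkQ
    have hli : LinearIndependent ℂ (fun i : ι => q (b (z i (r i)))) := by
      rw [Fintype.linearIndependent_iff]
      intro g hg i
      have hm : (∑ i, g i • z i (r i)) ∈ W' := by
        change b _ ∈ LinearMap.range a
        rw [← Submodule.Quotient.mk_eq_zero, ← Submodule.mkQ_apply]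
        rw [← hg]; simp [q]
      obtain ⟨c, hc⟩ := h3 ⟨_, hm⟩
      have hc' := congrArg W'.subtype hc
      simp only [map_sum, map_smul] at hc'
      have hc'' : ∑ i, ∑ p ∈ Finset.range (r i + 1),
          (if p = r i then - g i else c i p) • z i p = 0 := by
        have : ∀ i, ∑ p ∈ Finset.range (r i + 1),
          (if p = r i then - g i else c i p) • z i p =
          ∑ p ∈ Finset.range (r i), c i p • W'.subtype (w i p) - g i • z i (r i) := by
          intro i
          rw [Finset.sum_range_succ, if_pos rfl, neg_smul, ← sub_eq_add_neg]
          congr 1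
          apply Finset.sum_congr rfl
          intro p hp
          rw [Finset.mem_range] at hp
          rw [if_neg hp.ne, (h1 i p hp).1]
        rw [Finset.sum_congr rfl (fun i _ => this i), Finset.sum_sub_distrib, ← hc']
        simp
      have := h4 _ hc'' i (r i) (Nat.lt_succ_self _)
      simpa using this
    let bs := Basis.sumExtend hli
    have : Fintype (Basis.sumExtendIndex hli) := by
      have := FiniteDimensional.fintypeBasisIndex bs
      exact Fintype.ofInjective (Sum.inr (α := ι)) Sum.inr_injective
    have hbs : ∀ i, bs (Sum.inl i) = q (b (z i (r i))) := by
      intro i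
      simp only [bs, Basis.sumExtend, Basis.reindex_apply, Basis.extend_apply_self]
      rfl
    choose d hd using fun j => Submodule.mkQ_surjective (LinearMap.range a) (bs (Sum.inr j))
    refine ⟨ι ⊕ Basis.sumExtendIndex hli, inferInstance, Sum.elim (fun i => r i + 1) (fun _ => 0),
      Sum.elim (fun i p => z i p) (fun _ _ => 0),
      Sum.elim (fun i p => if p = r i + 1 then b (z i (r i)) else a (z i p)) (fun j _ => d j),
      ?_, ?_, ?_, ?_, ?_⟩
    · rintro (i | j) p hp
      · simp only [Sum.elim_inl] at hp ⊢
        refine ⟨by rw [if_neg hp.ne], ?_⟩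
        split_ifs with h
        · rw [Nat.add_right_cancel h]
        · have hp' : p < r i := by omega
          obtain ⟨e1, e2⟩ := h1 i p hp'
          rw [← e1, ← e2, hb']; rfl
      · simp at hp
    · intro c hc
      simp only [Fintype.sum_sum_type, Sum.elim_inl, Sum.elim_inr, Finset.range_zero,
        Finset.sum_empty, Finset.sum_const_zero, add_zero] at hc
      have := h4 _ hc
      rintro (i | j) p hp
      · exact this i p hp
      · simp at hp
    · intro v
      obtain ⟨c, hc⟩ := h5 v
      refine ⟨Sum.elim c 0, ?_⟩
      simpa [Fintype.sum_sum_type] using hc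
    · intro c hc
      have key : ∀ c : ι ⊕ Basis.sumExtendIndex hli → ℕ → ℂ, ∀ i, ∑ p ∈ Finset.range (r i + 1 + 1), c (Sum.inl i) p • (if p = r i + 1 then b (z i (r i)) else a (z i p))
        = a (∑ p ∈ Finset.range (r i + 1), c (Sum.inl i) p • z i p) + c (Sum.inl i) (r i + 1) • b (z i (r i)) := by
        intro c i
        rw [Finset.sum_range_succ, if_pos rfl, map_sum]
        congr 1
        apply Finset.sum_congr rfl
        intro p hp
        rw [Finset.mem_range] at hp
        rw [if_neg hp.ne, map_smul]
      simp only [Fintype.sum_sum_type, Sum.elim_inl, Sum.elim_inr, key, Finset.sum_add_distrib,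
        ← map_sum, zero_add, Finset.sum_range_one] at hc
      have hq : ∑ x, (Sum.elim (fun i => c (Sum.inl i) (r i + 1)) (fun j => c (Sum.inr j) 0) x) • bs x = 0 := by
        have := congrArg q hc
        have hqa : ∀ x, q (a x) = 0 := fun x => by
          simp [q]
        rw [map_add, map_add, hqa, zero_add, map_zero] at this
        rw [← this, Fintype.sum_sum_type]
        simp only [Sum.elim_inl, Sum.elim_inr, hbs, ← hd, map_sum, map_smul, q]
      have hl := Fintype.linearIndependent_iff.1 bs.linearIndependent _ hq
      have hl1 : ∀ i, c (Sum.inl i) (r i + 1) = 0 := fun i => hl (Sum.inl i)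
      have hl2 : ∀ j, c (Sum.inr j) 0 = 0 := fun j => hl (Sum.inr j)
      simp only [hl1, hl2, zero_smul, Finset.sum_const_zero, add_zero] at hc
      have hz := h4 _ (ha (hc.trans (map_zero a).symm))
      rintro (i | j) p hp
      · simp only [Sum.elim_inl] at hp
        rcases Nat.lt_succ_iff_lt_or_eq.1 hp with h | h
        · exact hz i p h
        · rw [h]; exact hl1 i
      · simp only [Sum.elim_inr, zero_add, Nat.lt_one_iff] at hp
        rw [hp]; exact hl2 j
    · intro v
      let f := bs.repr (q v)
      have hf : ∑ x, f x • bs x = q v := bs.sum_repr _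
      have hm : v - (∑ i, f (Sum.inl i) • b (z i (r i)) + ∑ j, f (Sum.inr j) • d j) ∈ LinearMap.range a := by
        rw [← Submodule.Quotient.mk_eq_zero, ← Submodule.mkQ_apply]
        rw [map_sub]
        change q v - _ = 0
        rw [← hf, Fintype.sum_sum_type]
        simp only [map_add, map_sum, map_smul, hbs, ← hd, q, sub_self]
      obtain ⟨u, hu⟩ := hm
      obtain ⟨c, hc⟩ := h5 u
      refine ⟨Sum.elim (fun i p => if p = r i + 1 then f (Sum.inl i) else c i p) (fun j _ => f (Sum.inr j)), ?_⟩
      simp only [Fintype.sum_sum_type, Sum.elim_inl, Sum.elim_inr, zero_add, Finset.sum_range_one]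
      have key : ∀ i, ∑ p ∈ Finset.range (r i + 1 + 1), (if p = r i + 1 then f (Sum.inl i) else c i p) • (if p = r i + 1 then b (z i (r i)) else a (z i p))
        = a (∑ p ∈ Finset.range (r i + 1), c i p • z i p) + f (Sum.inl i) • b (z i (r i)) := by
        intro i
        rw [Finset.sum_range_succ, if_pos rfl, if_pos rfl, map_sum]
        congr 1
        apply Finset.sum_congr rfl
        intro p hp
        rw [Finset.mem_range] at hp
        rw [if_neg hp.ne, if_neg hp.ne, map_smul]
      simp only [key, Finset.sum_add_distrib, ← map_sum, ← hc, hu]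
      abel
  · have hle := LinearMap.finrank_le_finrank_of_injective ha
    have heq : finrank ℂ W = finrank ℂ Z := by omega
    have hsub : Subsingleton W := by
      by_contra hns
      rw [not_subsingleton_iff_nontrivial] at hns
      let e := LinearEquiv.ofInjectiveOfFinrankEq a ha heq
      obtain ⟨t, ht⟩ := Module.End.exists_eigenvalue (e.symm.toLinearMap ∘ₗ b : Module.End ℂ W)
      obtain ⟨x, hx⟩ := ht.exists_hasEigenvector
      have := hx.apply_eq_smul
      apply hx.2
      apply hb t
      have h2 := congrArg e this
      rw [show e (t • x) = t • e x from map_smul e t x] at h2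
      rw [show e x = a x from rfl] at h2
      rw [← h2]
      exact (LinearEquiv.apply_symm_apply e (b x)).symm
    have hz : Subsingleton Z := by
      rw [← Module.finrank_zero_iff (R := ℂ)] at hsub ⊢
      omega
    refine ⟨Empty, inferInstance, fun _ => 0, fun _ _ => 0, fun _ _ => 0, ?_, ?_, ?_, ?_, ?_⟩
    · simp
    · intro c _ i; exact i.elim
    · intro v; exact ⟨fun _ _ => 0, Subsingleton.elim _ _⟩
    · intro c _ i; exact i.elim
    · intro v; exact ⟨fun _ _ => 0, Subsingleton.elim _ _⟩

theorem inj_generic {X Y : Type} [AddCommGroup X] [Module ℂ X] [AddCommGroup Y] [Module ℂ Y]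
    [FiniteDimensional ℂ X] (f g : X →ₗ[ℂ] Y) (hf : LinearMap.ker f = ⊥) :
    {t : ℂ | ¬ LinearMap.ker (f + t • g) = ⊥}.Finite := by
  obtain ⟨l, hl⟩ := f.exists_leftInverse_of_injective hf
  have hfin : Set.Finite {t : ℂ | Module.End.HasEigenvalue (l ∘ₗ g : Module.End ℂ X) t} :=
    Module.End.finite_hasEigenvalue _
  apply (hfin.image (fun t => - t⁻¹)).subset
  intro t ht
  simp only [Set.mem_ofPred_eq] at ht
  obtain ⟨x, hx, hx0⟩ := (Submodule.ne_bot_iff _).1 ht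
  have h1 : x + t • l (g x) = 0 := by
    have h := congrArg l (LinearMap.mem_ker.1 hx)
    have h' : l (f x) = x := LinearMap.congr_fun hl x
    simpa [h'] using h
  have ht0 : t ≠ 0 := by
    rintro rfl
    simp at h1
    exact hx0 h1
  refine ⟨- t⁻¹, ?_, by simp⟩
  apply Module.End.hasEigenvalue_of_hasEigenvector (x := x)
  refine ⟨?_, hx0⟩
  rw [Module.End.mem_eigenspace_iff]
  have : t • l (g x) = - x := by rw [eq_neg_iff_add_eq_zero, add_comm]; exact h1
  calc l (g x) = t⁻¹ • (t • l (g x)) := by rw [smul_smul, inv_mul_cancel₀ ht0, one_smul]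
    _ = _ := by rw [this]; simp

theorem exists_K {V : Type} [AddCommGroup V] [Module ℂ V] [FiniteDimensional ℂ V]
    (A B : V →ₗ[ℂ] Dual ℂ V) (hA : ∀ x y, A x y = A y x) (hB : ∀ x y, B x y = B y x) (h : ℕ)
    (hr : ∀ a b : ℂ, ¬(a = 0 ∧ b = 0) → finrank ℂ (LinearMap.ker (a • A + b • B)) = h) :
    ∃ K : Submodule ℂ V, (∀ x ∈ K, ∀ y ∈ K, A x y = 0 ∧ B x y = 0) ∧
      (∀ v, (∀ k ∈ K, A v k = 0) → v ∈ K) ∧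
      (∀ (t : ℂ) v, (∀ k ∈ K, B v k = t * A v k) → v ∈ K) ∧
      finrank ℂ V + h = 2 * finrank ℂ K := by
  have hrA : finrank ℂ (LinearMap.ker A) = h := by
    have := hr 1 0 (by simp)
    rwa [one_smul, zero_smul, add_zero] at this
  have hrB : finrank ℂ (LinearMap.ker B) = h := by
    have := hr 0 1 (by simp)
    rwa [one_smul, zero_smul, zero_add] at this
  -- dimension of images
  have dimmap : ∀ (f : V →ₗ[ℂ] Dual ℂ V) (X : Submodule ℂ V), LinearMap.ker f ≤ X →
      finrank ℂ (X.map f) + finrank ℂ (LinearMap.ker f) = finrank ℂ X := by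
    intro f X hX
    have := LinearMap.finrank_range_add_finrank_ker (f.domRestrict X)
    rw [LinearMap.range_domRestrict, LinearMap.ker_domRestrict] at this
    rw [← this]
    congr 1
    exact (Submodule.comapSubtypeEquivOfLe hX).finrank_eq.symm
  have dimmap' : ∀ (f : V →ₗ[ℂ] Dual ℂ V) (X : Submodule ℂ V), 
      finrank ℂ (X.map f) + finrank ℂ (X ⊓ LinearMap.ker f : Submodule ℂ V) = finrank ℂ X := by
    intro f X
    have := LinearMap.finrank_range_add_finrank_ker (f.domRestrict X)
    rw [LinearMap.range_domRestrict, LinearMap.ker_domRestrict] at this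
    rw [← this]
    congr 1
    rw [← Submodule.map_comap_subtype]
    exact (Submodule.equivMapOfInjective _ (Submodule.subtype_injective X) _).finrank_eq.symm
  let F : Submodule ℂ V →o Submodule ℂ V :=
    ⟨fun X => (X.map B).comap A, fun X Y hXY => Submodule.comap_mono (Submodule.map_mono hXY)⟩
  let K := F.lfp
  have hK : (K.map B).comap A = K := F.map_lfp
  have hKle : ∀ Y : Submodule ℂ V, (Y.map B).comap A ≤ Y → K ≤ Y := fun Y hY => F.lfp_le hY
  have kA : LinearMap.ker A ≤ K := by
    rw [← hK]; intro x hx; rw [Submodule.mem_comap, LinearMap.mem_ker.1 hx]; exact zero_mem _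
  have hAB : K.map A ≤ K.map B := by
    rw [Submodule.map_le_iff_le_comap, hK]
  have hdA := dimmap A K kA
  -- generic argument
  have hge : finrank ℂ (K.map B) ≤ finrank ℂ (K.map A) := by
    obtain ⟨C, hC⟩ := Submodule.exists_isCompl K
    obtain ⟨D, hD⟩ := Submodule.exists_isCompl (LinearMap.ker (B.domRestrict K))
    have f1 := inj_generic ((K.map B).mkQ ∘ₗ A ∘ₗ C.subtype) ((K.map B).mkQ ∘ₗ B ∘ₗ C.subtype) (by
      rw [LinearMap.ker_eq_bot']
      intro c hc
      have hc' : A c ∈ K.map B := by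
        rw [← Submodule.Quotient.mk_eq_zero]; exact hc
      have : (c : V) ∈ K := by rw [← hK]; exact hc'
      have := (Submodule.disjoint_def.1 hC.disjoint) c this c.2
      exact Subtype.ext this)
    have f2 := inj_generic (B.domRestrict K ∘ₗ D.subtype) (A.domRestrict K ∘ₗ D.subtype) (by
      rw [LinearMap.ker_eq_bot']
      intro c hc
      exact Subtype.ext ((Submodule.disjoint_def.1 hD.disjoint) c hc c.2))
    obtain ⟨t, ht⟩ := ((f1.union (f2.image (fun s => s⁻¹))).union (Set.finite_singleton 0)).infinite_compl.nonempty
    simp only [Set.mem_compl_iff, Set.mem_union, not_or, Set.mem_ofPred_eq, not_not, Set.mem_singleton_iff] at ht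
    obtain ⟨⟨t1, t2⟩, t0⟩ := ht
    have t2' : LinearMap.ker (B.domRestrict K ∘ₗ D.subtype + t⁻¹ • A.domRestrict K ∘ₗ D.subtype) = ⊥ := by
      by_contra hcon
      exact t2 ⟨t⁻¹, hcon, inv_inv t⟩
    let M := (1:ℂ) • A + t • B
    have hM : finrank ℂ (LinearMap.ker M) = h := hr 1 t (by simp)
    have kM : LinearMap.ker M ≤ K := by
      intro x hx
      have : x ∈ K ⊔ C := by rw [hC.sup_eq_top]; trivial
      obtain ⟨k, hk, c, hc, rfl⟩ := Submodule.mem_sup.1 this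
      have hx' : A k + A c + t • (B k + B c) = 0 := by simpa [M] using hx
      have hc0 : (⟨c, hc⟩ : C) = 0 := by
        rw [LinearMap.ker_eq_bot'] at t1
        apply t1
        change (K.map B).mkQ (A c) + t • (K.map B).mkQ (B c) = 0
        rw [← map_smul, ← map_add, Submodule.mkQ_apply, Submodule.Quotient.mk_eq_zero]
        have : A c + t • B c = -(A k + t • B k) := by
          rw [eq_neg_iff_add_eq_zero, ← hx', smul_add]; abel
        rw [this]
        exact neg_mem (add_mem (hAB (Submodule.mem_map_of_mem hk))
          (Submodule.smul_mem _ _ (Submodule.mem_map_of_mem hk)))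
      have : c = 0 := congrArg Subtype.val hc0
      rw [this, add_zero]; exact hk
    have hdM := dimmap M K kM
    -- rank of M on K at least rank of B on K
    have e1 : finrank ℂ D ≤ finrank ℂ (K.map M) := by
      let g : D →ₗ[ℂ] K.map M := LinearMap.codRestrict (K.map M) (M ∘ₗ K.subtype ∘ₗ D.subtype)
        (fun c => Submodule.mem_map_of_mem c.1.2)
      apply LinearMap.finrank_le_finrank_of_injective (f := g)
      rw [← LinearMap.ker_eq_bot, LinearMap.ker_eq_bot']
      intro c hc
      have hc' : A c + t • B c = 0 := by simpa [M, g] using congrArg Subtype.val hc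
      rw [LinearMap.ker_eq_bot'] at t2'
      apply t2'
      change B c + t⁻¹ • A c = 0
      have : B c + t⁻¹ • A c = t⁻¹ • (A c + t • B c) := by
        rw [smul_add, smul_smul, inv_mul_cancel₀ t0, one_smul, add_comm]
      rw [this, hc', smul_zero]
    have e2 : finrank ℂ D = finrank ℂ (K.map B) := by
      have h1 := Submodule.finrank_add_eq_of_isCompl hD
      have h2 := LinearMap.finrank_range_add_finrank_ker (B.domRestrict K)
      rw [LinearMap.range_domRestrict] at h2
      omega
    omega
  have hL : K.map A = K.map B := Submodule.eq_of_le_of_finrank_le hAB hge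
  -- isotropy
  have iso : K ≤ (K.map A).dualCoannihilator := by
    apply hKle
    intro u hu
    obtain ⟨u', hu', he⟩ := Submodule.mem_map.1 (Submodule.mem_comap.1 hu)
    rw [Submodule.mem_dualCoannihilator] at hu' ⊢
    rintro _ ⟨k, hk, rfl⟩
    rw [hA, ← he, hB]
    apply hu'
    rw [hL]
    exact Submodule.mem_map_of_mem hk
  have isoA : ∀ x ∈ K, ∀ y ∈ K, A x y = 0 := fun x hx y hy =>
    (Submodule.mem_dualCoannihilator _).1 (iso hy) _ (Submodule.mem_map_of_mem hx)
  have isoB : ∀ x ∈ K, ∀ y ∈ K, B x y = 0 := fun x hx y hy =>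
    (Submodule.mem_dualCoannihilator _).1 (iso hy) _ (by rw [hL]; exact Submodule.mem_map_of_mem hx)
  -- no eigenvectors
  have noeig : ∀ (t : ℂ) v, B v - t • A v ∈ K.map A → v ∈ K := by
    intro t v hv
    let M := (-t) • A + (1:ℂ) • B
    have hM : finrank ℂ (LinearMap.ker M) = h := hr (-t) 1 (by simp)
    have hle : K.map M ≤ K.map A := by
      rintro _ ⟨k, hk, rfl⟩
      simp only [M, LinearMap.add_apply, LinearMap.smul_apply]
      exact add_mem (Submodule.smul_mem _ _ (Submodule.mem_map_of_mem hk))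
        (Submodule.smul_mem _ _ (by rw [hL]; exact Submodule.mem_map_of_mem hk))
    have d1 := dimmap' M K
    have d2 := Submodule.finrank_mono hle
    have d3 : finrank ℂ (K ⊓ LinearMap.ker M : Submodule ℂ V) ≤ finrank ℂ (LinearMap.ker M) :=
      Submodule.finrank_mono inf_le_right
    have e1 : K.map M = K.map A := Submodule.eq_of_le_of_finrank_le hle (by omega)
    have e2 : (K ⊓ LinearMap.ker M : Submodule ℂ V) = LinearMap.ker M :=
      Submodule.eq_of_le_of_finrank_le inf_le_right (by rw [e1] at d1; omega)
    rw [← e1] at hv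
    obtain ⟨k, hk, hkv⟩ := hv
    have : v - k ∈ LinearMap.ker M := by
      rw [LinearMap.mem_ker, map_sub, hkv]
      simp [M]; abel
    rw [← e2] at this
    have := add_mem this.1 hk
    simpa using this
  -- X = K
  let X := (K.map A).dualCoannihilator
  have dX := Subspace.finrank_add_finrank_dualCoannihilator_eq (K.map A)
  have dK := Subspace.finrank_add_finrank_dualAnnihilator_eq K
  have hXle : ∀ x ∈ X, A x ∈ K.dualAnnihilator ∧ B x ∈ K.dualAnnihilator := by
    intro x hx
    rw [Submodule.mem_dualCoannihilator] at hx
    constructor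
    · rw [Submodule.mem_dualAnnihilator]
      intro k hk
      rw [hA]; exact hx _ (Submodule.mem_map_of_mem hk)
    · rw [Submodule.mem_dualAnnihilator]
      intro k hk
      rw [hB]; exact hx _ (by rw [hL]; exact Submodule.mem_map_of_mem hk)
  have dAX := dimmap A X (kA.trans iso)
  have hAX : X.map A = K.dualAnnihilator := by
    apply Submodule.eq_of_le_of_finrank_le
    · rintro _ ⟨x, hx, rfl⟩
      exact (hXle x hx).1
    · change _ + finrank ℂ X = _ at dX
      omega
  have hXK : X = K := by
    by_contra hne
    let a : X →ₗ[ℂ] K.dualAnnihilator := (A.domRestrict X).codRestrict _ (fun x => (hXle x x.2).1)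
    let b : X →ₗ[ℂ] K.dualAnnihilator := (B.domRestrict X).codRestrict _ (fun x => (hXle x x.2).2)
    have ha : Function.Surjective a := by
      rintro ⟨y, hy⟩
      rw [← hAX] at hy
      obtain ⟨x, hx, rfl⟩ := hy
      exact ⟨⟨x, hx⟩, rfl⟩
    obtain ⟨s, hs⟩ := a.exists_rightInverse_of_surjective (LinearMap.range_eq_top.2 ha)
    let σ : X →ₗ[ℂ] X := s ∘ₗ b
    have hσ : ∀ x : X, A (σ x) = B x := fun x =>
      congrArg Subtype.val (LinearMap.congr_fun hs (b x))
    let K' : Submodule ℂ X := K.comap X.subtype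
    have hK' : K' ≤ K'.comap σ := by
      intro x hx
      change (σ x : V) ∈ K
      rw [← hK, Submodule.mem_comap, hσ]
      exact Submodule.mem_map_of_mem hx
    have : Nontrivial (X ⧸ K') := by
      rw [Submodule.Quotient.nontrivial_iff]
      intro htop
      apply hne
      apply le_antisymm _ iso
      intro x hx
      have : (⟨x, hx⟩ : X) ∈ K' := by rw [htop]; trivial
      exact this
    obtain ⟨t, ht⟩ := Module.End.exists_eigenvalue (K'.mapQ K' σ hK' : Module.End ℂ (X ⧸ K'))
    obtain ⟨y, hy⟩ := ht.exists_hasEigenvector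
    obtain ⟨x, rfl⟩ := K'.mkQ_surjective y
    have h1 := hy.apply_eq_smul
    rw [Submodule.mkQ_apply, Submodule.mapQ_apply, ← Submodule.Quotient.mk_smul, Submodule.Quotient.eq] at h1
    apply hy.2
    rw [Submodule.mkQ_apply, Submodule.Quotient.mk_eq_zero]
    change (x : V) ∈ K
    apply noeig t
    have h2 : ((σ x : V) - t • (x : V)) ∈ K := h1
    have := Submodule.mem_map_of_mem (f := A) h2
    rwa [map_sub, map_smul, hσ] at this
  have hann : K.dualAnnihilator = K.map A := by rw [← hAX, hXK]
  refine ⟨K, fun x hx y hy => ⟨isoA x hx y hy, isoB x hx y hy⟩, ?_, ?_, ?_⟩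
  · intro v hv
    rw [← hK, ← hL, ← hann, Submodule.mem_comap, Submodule.mem_dualAnnihilator]
    exact hv
  · intro t v hv
    apply noeig t
    rw [← hann, Submodule.mem_dualAnnihilator]
    intro k hk
    simp [hv k hk]
  · rw [hann] at dK
    omega

theorem chain_sorted (W Z : Type) [AddCommGroup W] [Module ℂ W] [AddCommGroup Z]
    [Module ℂ Z] [FiniteDimensional ℂ W] [FiniteDimensional ℂ Z] (a b : W →ₗ[ℂ] Z)
    (ha : Function.Injective a) (hb : ∀ (t : ℂ) w, b w = t • a w → w = 0) :
    ∃ (m : ℕ) (r : Fin m → ℕ) (w : Fin m → ℕ → W) (z : Fin m → ℕ → Z), Monotone r ∧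
      (∀ i p, p < r i → a (w i p) = z i p ∧ b (w i p) = z i (p + 1)) ∧
      LIx r w ∧ SPx r w ∧ LIx (fun i => r i + 1) z ∧ SPx (fun i => r i + 1) z := by
  obtain ⟨ι, _, r, w, z, h1, h2, h3, h4, h5⟩ := chain_exists _ W Z a b rfl ha hb
  let e0 := (Fintype.equivFin ι).symm
  let e : Fin (Fintype.card ι) ≃ ι := (Tuple.sort (r ∘ e0)).trans e0
  have hLI : ∀ {W : Type} [AddCommGroup W] [Module ℂ W] (r : ι → ℕ) (w : ι → ℕ → W), LIx r w →
      LIx (fun i => r (e i)) (fun i => w (e i)) := by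
    intro W _ _ r w h c hc i p hp
    have := h (fun i => c (e.symm i)) (by
      rw [← hc, ← Equiv.sum_comp e]; simp) (e i) p hp
    simpa using this
  have hSP : ∀ {W : Type} [AddCommGroup W] [Module ℂ W] (r : ι → ℕ) (w : ι → ℕ → W), SPx r w →
      SPx (fun i => r (e i)) (fun i => w (e i)) := by
    intro W _ _ r w h v
    obtain ⟨c, hc⟩ := h v
    refine ⟨fun i => c (e i), ?_⟩
    rw [hc, ← Equiv.sum_comp e]
  refine ⟨Fintype.card ι, fun i => r (e i), fun i => w (e i), fun i => z (e i), ?_, ?_,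
    hLI _ _ h2, hSP _ _ h3, hLI _ _ h4, hSP _ _ h5⟩
  · exact Tuple.monotone_sort (r ∘ e0)
  · intro i p hp
    exact h1 (e i) p hp

theorem basis_of_chain {ι W : Type} [Fintype ι] [AddCommGroup W] [Module ℂ W] (r : ι → ℕ)
    (w : ι → ℕ → W) (h1 : LIx r w) (h2 : SPx r w) :
    ∃ b : Basis ((i : ι) × Fin (r i)) ℂ W, ∀ i (p : Fin (r i)), b ⟨i, p⟩ = w i p := by
  have hli : LinearIndependent ℂ (fun s : (i : ι) × Fin (r i) => w s.1 s.2) := by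
    rw [Fintype.linearIndependent_iff]
    intro g hg
    have := h1 (fun i p => if h : p < r i then g ⟨i, ⟨p, h⟩⟩ else 0) (by
      rw [← hg, Fintype.sum_sigma]
      apply Finset.sum_congr rfl
      intro i _
      rw [Finset.sum_range]
      apply Finset.sum_congr rfl
      intro p _
      simp)
    rintro ⟨i, p⟩
    simpa using this i p p.2
  have hsp : ⊤ ≤ Submodule.span ℂ (Set.range (fun s : (i : ι) × Fin (r i) => w s.1 s.2)) := by
    intro v _
    obtain ⟨c, rfl⟩ := h2 v
    apply Submodule.sum_mem
    intro i _
    apply Submodule.sum_mem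
    intro p hp
    apply Submodule.smul_mem
    exact Submodule.subset_span ⟨⟨i, ⟨p, Finset.mem_range.1 hp⟩⟩, rfl⟩
  exact ⟨Basis.mk hli hsp, fun i p => by simp⟩

theorem dual_vectors {m : ℕ} {K : Type} [AddCommGroup K] [Module ℂ K] [FiniteDimensional ℂ K]
    (r : Fin m → ℕ) (z : Fin m → ℕ → Dual ℂ K) (b : Basis ((i : Fin m) × Fin (r i)) ℂ (Dual ℂ K))
    (hb : ∀ i (p : Fin (r i)), b ⟨i, p⟩ = z i p) :
    ∃ k : Fin m → ℕ → K, ∀ i p j q, p < r i → q < r j →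
      z i p (k j q) = if i = j ∧ p = q then 1 else 0 := by
  refine ⟨fun j q => if h : q < r j then (evalEquiv ℂ K).symm (b.dualBasis ⟨j, ⟨q, h⟩⟩) else 0, ?_⟩
  intro i p j q hp hq
  beta_reduce
  rw [dif_pos hq, ← hb i ⟨p, hp⟩, Module.apply_evalEquiv_symm_apply, Basis.dualBasis_apply_self]
  congr 1
  apply propext
  constructor
  · intro h
    rw [Sigma.mk.injEq] at h
    obtain ⟨rfl, h⟩ := h
    exact ⟨rfl, by simpa using h⟩
  · rintro ⟨rfl, rfl⟩; rfl

theorem solve_sym {S : Type} (α β : S → ℕ → S → ℕ → ℂ)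
    (hα : ∀ i p j q, α i p j q = α j q i p) (hβ : ∀ i p j q, β i p j q = β j q i p) :
    ∃ X : S → ℕ → S → ℕ → ℂ, ∀ i p j q, X j q i p + X i p j q = α i p j q ∧
      X j q i (p + 1) + X i p j (q + 1) = β i p j q := by
  let F : S → S → ℕ → ℕ → ℂ := fun i j q => Nat.rec (fun _ => 0)
    (fun q f p => f (p + 1) + β i p j q - α i (p + 1) j q) q
  have hF : ∀ i j q p, F i j (q + 1) p = F i j q (p + 1) + β i p j q - α i (p + 1) j q :=
    fun i j q p => rfl
  refine ⟨fun i p j q => (F i j q p + (α j q i p - F j i p q)) / 2, fun i p j q => ⟨?_, ?_⟩⟩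
  · beta_reduce
    rw [hα j q i p]; ring
  · simp only [hF]
    rw [hβ j q i p, hα i (p + 1) j q, hα j (q + 1) i p]; ring

theorem assemble {V : Type} [AddCommGroup V] [Module ℂ V] [FiniteDimensional ℂ V]
    (A B : V →ₗ[ℂ] Dual ℂ V) (hA : ∀ x y, A x y = A y x) (hB : ∀ x y, B x y = B y x) (h : ℕ)
    (hr : ∀ a b : ℂ, ¬(a = 0 ∧ b = 0) → finrank ℂ (LinearMap.ker (a • A + b • B)) = h)
    (hker : ∀ v, A v = 0 → B v = 0 → v = 0) :
    ∃ (m : ℕ) (r : Fin m → ℕ) (w k : Fin m → ℕ → V), Monotone r ∧ (∀ i, 1 ≤ r i) ∧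
      finrank ℂ V = 2 * ∑ i, r i + m ∧ finrank ℂ V + h = 2 * (∑ i, r i + m) ∧
      (∀ i p j q, p < r i → q < r j → A (w i p) (w j q) = 0 ∧ B (w i p) (w j q) = 0) ∧
      (∀ i p j q, A (k i p) (k j q) = 0 ∧ B (k i p) (k j q) = 0) ∧
      (∀ i p j q, p < r i → q < r j + 1 →
        A (w i p) (k j q) = (if i = j ∧ p = q then 1 else 0) ∧
        B (w i p) (k j q) = (if i = j ∧ p + 1 = q then 1 else 0)) ∧
      (∀ c : Fin m → ℕ → ℂ, ∑ i, ∑ p ∈ Finset.range (r i + 1), c i p • k i p = 0 →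
        ∀ i, ∀ p < r i + 1, c i p = 0) := by
  obtain ⟨K, iso, nA, nB, hdim⟩ := exists_K A B hA hB h hr
  obtain ⟨C, hC⟩ := Submodule.exists_isCompl K
  let res : Dual ℂ V →ₗ[ℂ] Dual ℂ K := K.subtype.dualMap
  let a : C →ₗ[ℂ] Dual ℂ K := res ∘ₗ A ∘ₗ C.subtype
  let b : C →ₗ[ℂ] Dual ℂ K := res ∘ₗ B ∘ₗ C.subtype
  have ha : ∀ (c : C) (k : K), a c k = A c k := fun _ _ => rfl
  have hb : ∀ (c : C) (k : K), b c k = B c k := fun _ _ => rfl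
  obtain ⟨m, r, w, z, hmono, h1, h2, h3, h4, h5⟩ := chain_sorted C (Dual ℂ K) a b
    (by
      rw [← LinearMap.ker_eq_bot, LinearMap.ker_eq_bot']
      intro c hc
      apply Subtype.ext
      apply (Submodule.disjoint_def.1 hC.disjoint) c _ c.2
      apply nA
      intro k hk
      exact LinearMap.congr_fun hc ⟨k, hk⟩)
    (by
      intro t c hc
      apply Subtype.ext
      apply (Submodule.disjoint_def.1 hC.disjoint) c _ c.2
      apply nB t
      intro k hk
      exact LinearMap.congr_fun hc ⟨k, hk⟩)
  obtain ⟨bw, hbw⟩ := basis_of_chain r w h2 h3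
  obtain ⟨bz, hbz⟩ := basis_of_chain _ z h4 h5
  obtain ⟨k, hk⟩ := dual_vectors _ z bz hbz
  have dC : finrank ℂ C = ∑ i, r i := by
    rw [Module.finrank_eq_card_basis bw]; simp
  have dK : finrank ℂ K = ∑ i, r i + m := by
    rw [← Subspace.dual_finrank_eq, Module.finrank_eq_card_basis bz]; simp [Finset.sum_add_distrib]
  have dV := Submodule.finrank_add_eq_of_isCompl hC
  -- the correction
  obtain ⟨X, hX⟩ := solve_sym (fun i p j q => - A (w i p) (w j q)) (fun i p j q => - B (w i p) (w j q))
    (by intro i p j q; rw [hA]) (by intro i p j q; rw [hB])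
  let x : Fin m → ℕ → K := fun i p => ∑ j, ∑ q ∈ Finset.range (r j + 1), X i p j q • k j q
  have hx : ∀ i p j q, q < r j + 1 → z j q (x i p) = X i p j q := by
    intro i p j q hq
    simp only [x, map_sum, map_smul]
    rw [Finset.sum_eq_single j, Finset.sum_eq_single q]
    · rw [hk _ _ _ _ hq hq]; simp
    · intro q' hq' hne
      rw [hk _ _ _ _ hq (Finset.mem_range.1 hq'), if_neg (fun h => hne h.2.symm), smul_zero]
    · intro h; exact absurd (Finset.mem_range.2 hq) h
    · intro j' _ hne
      apply Finset.sum_eq_zero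
      intro q' hq'
      rw [hk _ _ _ _ hq (Finset.mem_range.1 hq'), if_neg (fun h => hne h.1.symm), smul_zero]
    · simp
  have Awk : ∀ i p (y : K), p < r i → A (w i p) y = z i p y := by
    intro i p y hp
    rw [← (h1 i p hp).1, ha]
  have Bwk : ∀ i p (y : K), p < r i → B (w i p) y = z i (p + 1) y := by
    intro i p y hp
    rw [← (h1 i p hp).2, hb]
  refine ⟨m, r, fun i p => w i p + x i p, fun i p => k i p, hmono, ?_, by omega, by omega, ?_, ?_, ?_, ?_⟩
  · intro i
    by_contra hi
    have hi0 : r i = 0 := by omega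
    have key : ∀ v : V, A v (k i 0) = 0 ∧ B v (k i 0) = 0 := by
      intro v
      have : v ∈ K ⊔ C := by rw [hC.sup_eq_top]; trivial
      obtain ⟨y, hy, c, hc, rfl⟩ := Submodule.mem_sup.1 this
      obtain ⟨g, hg⟩ := h3 ⟨c, hc⟩
      have hg' := congrArg C.subtype hg
      simp only [map_sum, map_smul, Submodule.subtype_apply] at hg'
      rw [map_add, map_add, LinearMap.add_apply, LinearMap.add_apply,
        (iso y hy _ (k i 0).2).1, (iso y hy _ (k i 0).2).2, zero_add, zero_add, hg']
      simp only [map_sum, map_smul, LinearMap.sum_apply, LinearMap.smul_apply]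
      constructor
      · apply Finset.sum_eq_zero
        intro j _
        apply Finset.sum_eq_zero
        intro p hp
        rw [Finset.mem_range] at hp
        rw [Awk _ _ _ hp, hk _ _ _ _ (by omega) (by omega), if_neg, smul_zero]
        rintro ⟨rfl, _⟩; omega
      · apply Finset.sum_eq_zero
        intro j _
        apply Finset.sum_eq_zero
        intro p hp
        rw [Finset.mem_range] at hp
        rw [Bwk _ _ _ hp, hk _ _ _ _ (by omega) (by omega), if_neg, smul_zero]
        rintro ⟨rfl, _⟩; omega
    have h0 : (k i 0 : V) = 0 := by
      apply hker
      · ext v; rw [hA]; exact (key v).1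
      · ext v; rw [hB]; exact (key v).2
    have h0' : k i 0 = 0 := Subtype.ext h0
    have := hk i 0 i 0 (by omega) (by omega)
    rw [h0'] at this
    simp at this
  · intro i p j q hp hq
    have e1 := (hX i p j q).1
    have e2 := (hX i p j q).2
    simp only [map_add, LinearMap.add_apply]
    rw [hA (x i p) (w j q), hB (x i p) (w j q), (iso _ (x i p).2 _ (x j q).2).1,
      (iso _ (x i p).2 _ (x j q).2).2, Awk _ _ _ hp, Awk _ _ _ hq, Bwk _ _ _ hp, Bwk _ _ _ hq,
      hx _ _ _ _ (by omega), hx _ _ _ _ (by omega), hx _ _ _ _ (by omega), hx _ _ _ _ (by omega)]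
    constructor
    · linear_combination e1
    · linear_combination e2
  · intro i p j q
    exact iso _ (k i p).2 _ (k j q).2
  · intro i p j q hp hq
    simp only [map_add, LinearMap.add_apply]
    rw [(iso _ (x i p).2 _ (k j q).2).1, (iso _ (x i p).2 _ (k j q).2).2, Awk _ _ _ hp, Bwk _ _ _ hp,
      hk _ _ _ _ (by omega) hq, hk _ _ _ _ (by omega) hq, add_zero, add_zero]
    exact ⟨rfl, rfl⟩
  · intro c hc i p hp
    have hc' : ∑ i, ∑ p ∈ Finset.range (r i + 1), c i p • k i p = 0 := by
      apply Subtype.ext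
      simpa using hc
    have := congrArg (z i p) hc'
    simp only [map_sum, map_smul, map_zero] at this
    rw [← this, Finset.sum_eq_single i, Finset.sum_eq_single p]
    · rw [hk _ _ _ _ hp hp]; simp
    · intro q' hq' hne
      rw [hk _ _ _ _ hp (Finset.mem_range.1 hq'), if_neg (fun h => hne h.2.symm), smul_zero]
    · intro h; exact absurd (Finset.mem_range.2 hp) h
    · intro j' _ hne
      apply Finset.sum_eq_zero
      intro q' hq'
      rw [hk _ _ _ _ hp (Finset.mem_range.1 hq'), if_neg (fun h => hne h.1.symm), smul_zero]
    · simp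

theorem pencil_congruent_to_canonical
    (N r : ℕ) (hN : 2 ≤ N) (hr : 1 ≤ r)
    (A B : Matrix (Fin (N + 1)) (Fin (N + 1)) ℂ)
    (hAsymm : A.IsSymm) (hBsymm : B.IsSymm)
    (hrank : ∀ a b : ℂ, ¬(a = 0 ∧ b = 0) → (a • A + b • B).rank = 2 * r)
    (hker : ∀ v : Fin (N + 1) → ℂ, A.mulVec v = 0 → B.mulVec v = 0 → v = 0)
    (hspan : LinearMap.range A.mulVecLin ⊔ LinearMap.range B.mulVecLin = ⊤) :
    ∃ rr : Fin (N + 1 - 2 * r) → ℕ, Monotone rr ∧ (∀ i, 1 ≤ rr i) ∧ (∑ i, rr i = r) ∧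
      ∃ (P : Matrix (Fin (N + 1)) (PencilIdx (N + 1 - 2 * r) rr) ℂ)
        (Q : Matrix (PencilIdx (N + 1 - 2 * r) rr) (Fin (N + 1)) ℂ),
        P * Q = 1 ∧ Q * P = 1 ∧
        Submodule.span ℂ {Pᵀ * A * P, Pᵀ * B * P} =
          Submodule.span ℂ {canA (N + 1 - 2 * r) rr, canB (N + 1 - 2 * r) rr} := by
  let V := Fin (N + 1) → ℂ
  have hle : 2 * r ≤ N + 1 := by
    rw [← hrank 1 0 (by simp)]
    simpa using Matrix.rank_le_card_height ((1:ℂ) • A + (0:ℂ) • B)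
  let T : Matrix (Fin (N + 1)) (Fin (N + 1)) ℂ → (V →ₗ[ℂ] Dual ℂ V) :=
    fun M => Matrix.toLinearMap₂' ℂ M
  have hT : ∀ M x y, T M x y = x ⬝ᵥ M *ᵥ y := fun M x y => Matrix.toLinearMap₂'_apply' M x y
  have hTlin : ∀ (a b : ℂ), a • T A + b • T B = T (a • A + b • B) := by
    intro a b
    simp [T]
  have hsym : ∀ M : Matrix (Fin (N + 1)) (Fin (N + 1)) ℂ, M.IsSymm → ∀ x y, T M x y = T M y x := by
    intro M hM x y
    rw [hT, hT, Matrix.dotProduct_mulVec, ← Matrix.mulVec_transpose, hM.eq, dotProduct_comm]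
  have hTker : ∀ M : Matrix (Fin (N + 1)) (Fin (N + 1)) ℂ, M.IsSymm → ∀ x, T M x = 0 ↔ M *ᵥ x = 0 := by
    intro M hM x
    constructor
    · intro h
      apply dotProduct_eq_zero
      intro y
      rw [dotProduct_comm, ← hT, hsym M hM, h]; rfl
    · intro h
      apply LinearMap.ext
      intro y
      rw [hsym M hM, hT, h]; simp
  obtain ⟨m, rr, w, k, hmono, hpos, d1, d2, hww, hkk, hwk, -⟩ := assemble (T A) (T B)
    (hsym A hAsymm) (hsym B hBsymm) (N + 1 - 2 * r) (by
      intro a b hab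
      have hs : (a • A + b • B).IsSymm := (hAsymm.smul a).add (hBsymm.smul b)
      have h1 : LinearMap.ker (a • T A + b • T B) = LinearMap.ker (a • A + b • B).mulVecLin := by
        rw [hTlin]
        ext x
        rw [LinearMap.mem_ker, LinearMap.mem_ker, hTker _ hs, Matrix.mulVecLin_apply]
      have h2 := LinearMap.finrank_range_add_finrank_ker (a • A + b • B).mulVecLin
      have h3 := hrank a b hab
      rw [Matrix.rank] at h3
      rw [h1]
      rw [h3, Module.finrank_fin_fun] at h2
      exact (Nat.sub_eq_of_eq_add' h2.symm).symm)
    (fun v h1 h2 => hker v ((hTker A hAsymm v).1 h1) ((hTker B hBsymm v).1 h2))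
  have dV : finrank ℂ V = N + 1 := Module.finrank_fin_fun ℂ
  have hm : m = N + 1 - 2 * r := by omega
  subst hm
  refine ⟨rr, hmono, hpos, by omega, ?_⟩
  let e : PencilIdx (N + 1 - 2 * r) rr → V := fun u =>
    if (u.2 : ℕ) < rr u.1 then w u.1 u.2 else k u.1 (u.2 - rr u.1)
  have eA : ∀ u v, T A (e u) (e v) = canA _ rr u v := by
    rintro ⟨i, p, hp⟩ ⟨j, q, hq⟩
    simp only [e, canA, Matrix.of_apply]
    by_cases h1 : p < rr i <;> by_cases h2 : q < rr j
    · rw [if_pos h1, if_pos h2, (hww _ _ _ _ h1 h2).1, if_neg]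
      rintro ⟨rfl, h⟩; omega
    · rw [if_pos h1, if_neg h2, (hwk _ _ _ _ h1 (by omega)).1]
      congr 1
      apply propext
      constructor
      · rintro ⟨rfl, h⟩; exact ⟨rfl, by omega⟩
      · rintro ⟨rfl, h⟩; exact ⟨rfl, by omega⟩
    · rw [if_neg h1, if_pos h2, hsym A hAsymm, (hwk _ _ _ _ h2 (by omega)).1]
      congr 1
      apply propext
      constructor
      · rintro ⟨rfl, h⟩; exact ⟨rfl, by omega⟩
      · rintro ⟨rfl, h⟩; exact ⟨rfl, by omega⟩
    · rw [if_neg h1, if_neg h2, (hkk _ _ _ _).1, if_neg]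
      rintro ⟨rfl, h⟩; omega
  have eB : ∀ u v, T B (e u) (e v) = canB _ rr u v := by
    rintro ⟨i, p, hp⟩ ⟨j, q, hq⟩
    simp only [e, canB, Matrix.of_apply]
    by_cases h1 : p < rr i <;> by_cases h2 : q < rr j
    · rw [if_pos h1, if_pos h2, (hww _ _ _ _ h1 h2).2, if_neg]
      rintro ⟨rfl, h⟩; omega
    · rw [if_pos h1, if_neg h2, (hwk _ _ _ _ h1 (by omega)).2]
      congr 1
      apply propext
      constructor
      · rintro ⟨rfl, h⟩; exact ⟨rfl, by omega⟩
      · rintro ⟨rfl, h⟩; exact ⟨rfl, by omega⟩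
    · rw [if_neg h1, if_pos h2, hsym B hBsymm, (hwk _ _ _ _ h2 (by omega)).2]
      congr 1
      apply propext
      constructor
      · rintro ⟨rfl, h⟩; exact ⟨rfl, by omega⟩
      · rintro ⟨rfl, h⟩; exact ⟨rfl, by omega⟩
    · rw [if_neg h1, if_neg h2, (hkk _ _ _ _).2, if_neg]
      rintro ⟨rfl, h⟩; omega
  have htest : ∀ u, ∃ φ : Dual ℂ V, ∀ v, φ (e v) = if v = u then 1 else 0 := by
    rintro ⟨i, p, hp⟩
    have hpi := hpos i
    have hiff : ∀ j q hq, ((⟨j, ⟨q, hq⟩⟩ : PencilIdx (N + 1 - 2 * r) rr) = ⟨i, ⟨p, hp⟩⟩ ↔ j = i ∧ q = p) := by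
      intro j q hq
      constructor
      · intro h
        rw [Sigma.mk.injEq] at h
        obtain ⟨rfl, h⟩ := h
        exact ⟨rfl, by simpa using h⟩
      · rintro ⟨rfl, rfl⟩; rfl
    rcases lt_or_ge p (rr i) with h1 | h1
    · refine ⟨T A (e ⟨i, ⟨p + rr i, by omega⟩⟩), ?_⟩
      rintro ⟨j, q, hq⟩
      rw [eA]
      simp only [canA, Matrix.of_apply]
      congr 1
      rw [hiff]
      apply propext
      constructor
      · rintro ⟨rfl, h⟩; exact ⟨rfl, by omega⟩
      · rintro ⟨rfl, h⟩; exact ⟨rfl, by omega⟩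
    rcases lt_or_ge p (2 * rr i) with h2 | h2
    · refine ⟨T A (e ⟨i, ⟨p - rr i, by omega⟩⟩), ?_⟩
      rintro ⟨j, q, hq⟩
      rw [eA]
      simp only [canA, Matrix.of_apply]
      congr 1
      rw [hiff]
      apply propext
      constructor
      · rintro ⟨rfl, h⟩; exact ⟨rfl, by omega⟩
      · rintro ⟨rfl, h⟩; exact ⟨rfl, by omega⟩
    · refine ⟨T B (e ⟨i, ⟨rr i - 1, by omega⟩⟩), ?_⟩
      rintro ⟨j, q, hq⟩
      rw [eB]
      simp only [canB, Matrix.of_apply]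
      congr 1
      rw [hiff]
      apply propext
      constructor
      · rintro ⟨rfl, h⟩; exact ⟨rfl, by omega⟩
      · rintro ⟨rfl, h⟩; exact ⟨rfl, by omega⟩
  have hli : LinearIndependent ℂ e := by
    rw [Fintype.linearIndependent_iff]
    intro g hg u
    obtain ⟨φ, hφ⟩ := htest u
    have := congrArg φ hg
    simpa [map_sum, hφ] using this
  have hcard : Fintype.card (PencilIdx (N + 1 - 2 * r) rr) = finrank ℂ V := by
    rw [d1]
    simp [Finset.sum_add_distrib, Finset.mul_sum]
  have hne : Nonempty (PencilIdx (N + 1 - 2 * r) rr) := by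
    rw [← Fintype.card_pos_iff, hcard, dV]; omega
  let bE := basisOfLinearIndependentOfCardEqFinrank hli hcard
  have hbE : ∀ u, bE u = e u := fun u => by simp [bE]
  let b0 := Pi.basisFun ℂ (Fin (N + 1))
  have hP : ∀ x u, b0.toMatrix bE x u = e u x := by
    intro x u
    rw [Basis.toMatrix_apply, hbE]; simp [b0]
  have hgram : ∀ M : Matrix (Fin (N + 1)) (Fin (N + 1)) ℂ, ∀ u v,
      ((b0.toMatrix bE)ᵀ * M * b0.toMatrix bE) u v = T M (e u) (e v) := by
    intro M u v
    rw [hT, Matrix.mul_assoc, Matrix.mul_apply]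
    simp only [dotProduct, Matrix.mulVec, Matrix.mul_apply, Matrix.transpose_apply, hP]
  refine ⟨b0.toMatrix bE, bE.toMatrix b0, Basis.toMatrix_mul_toMatrix_flip _ _,
    Basis.toMatrix_mul_toMatrix_flip _ _, ?_⟩
  have g1 : (b0.toMatrix bE)ᵀ * A * b0.toMatrix bE = canA _ rr := by
    ext u v; rw [hgram, eA]
  have g2 : (b0.toMatrix bE)ᵀ * B * b0.toMatrix bE = canB _ rr := by
    ext u v; rw [hgram, eB]
  rw [g1, g2]
end

section
/- Let h ≥ 1 and 1 ≤ r₁ ≤ r₂ ≤ … ≤ r_h be integers, r = r₁ + … + r_h, N = 2r + h − 1, and let 𝒜, ℬ be the canonical matrices associated to the partition (r₁,…,r_h). Then: (i) rank(a•𝒜 + b•ℬ) = 2r for every (a,b) ∈ ℂ² with (a,b) ≠ (0,0); (ii) ker 𝒜 ∩ ker ℬ = {0}; and (iii) the column spaces of 𝒜 and ℬ together span ℂ^{N+1}. In particular, for every r ≥ 1 and every N with 2r ≤ N ≤ 3r − 1 there exists a non-degenerate pencil of complex symmetric matrices of size N+1 and constant rank 2r. -/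
open Matrix

/-- Coordinates extended by zero. -/
noncomputable def pV {h : ℕ} {rr : Fin h → ℕ} (v : PencilIdx h rr → ℂ) (i : Fin h) (n : ℕ) : ℂ :=
  if hn : n < 2 * rr i + 1 then v ⟨i, ⟨n, hn⟩⟩ else 0

theorem pV_coe {h : ℕ} {rr : Fin h → ℕ} (v : PencilIdx h rr → ℂ) (i : Fin h)
    (p : Fin (2 * rr i + 1)) : pV v i p = v ⟨i, p⟩ := by
  simp only [pV, dif_pos p.2]

theorem idx_eq {h : ℕ} {rr : Fin h → ℕ} {w : PencilIdx h rr} {i : Fin h} {n : ℕ}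
    (hn : n < 2 * rr i + 1) : w = ⟨i, ⟨n, hn⟩⟩ ↔ i = w.1 ∧ (w.2 : ℕ) = n := by
  obtain ⟨j, q⟩ := w
  constructor
  · intro e
    cases e
    exact ⟨rfl, rfl⟩
  · rintro ⟨e, e2⟩
    dsimp at e e2
    subst e
    subst e2
    rfl

theorem row_sum {h : ℕ} {rr : Fin h → ℕ} (P : PencilIdx h rr → Prop) [DecidablePred P]
    (v : PencilIdx h rr → ℂ) (i : Fin h) (n : ℕ) (hn : n < 2 * rr i + 1)
    (hP : ∀ w, P w ↔ i = w.1 ∧ (w.2 : ℕ) = n) :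
    ∑ w, (if P w then (1 : ℂ) else 0) * v w = pV v i n := by
  have : ∀ w, (if P w then (1 : ℂ) else 0) * v w = if w = ⟨i, ⟨n, hn⟩⟩ then v w else 0 := by
    intro w
    have := (hP w).trans (idx_eq hn).symm
    simp [this]
  simp [this, pV, hn]

theorem row_zero {h : ℕ} {rr : Fin h → ℕ} (P : PencilIdx h rr → Prop) [DecidablePred P]
    (v : PencilIdx h rr → ℂ) (hP : ∀ w, ¬ P w) :
    ∑ w, (if P w then (1 : ℂ) else 0) * v w = 0 := by
  simp [hP]

theorem canA_mulVec {h : ℕ} {rr : Fin h → ℕ} (v : PencilIdx h rr → ℂ) (i : Fin h)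
    (p : Fin (2 * rr i + 1)) :
    (canA h rr).mulVec v ⟨i, p⟩ =
      if (p : ℕ) < rr i then pV v i (p + rr i)
      else if (p : ℕ) < 2 * rr i then pV v i (p - rr i) else 0 := by
  have hp := p.2
  simp only [Matrix.mulVec, dotProduct, canA, Matrix.of_apply]
  split_ifs with h1 h2
  · apply row_sum _ _ _ _ (by omega)
    intro w
    constructor
    · rintro ⟨e, h⟩; exact ⟨e, by omega⟩
    · rintro ⟨e, h⟩; exact ⟨e, by omega⟩
  · apply row_sum _ _ _ _ (by omega)
    intro w
    constructor
    · rintro ⟨e, h⟩; exact ⟨e, by omega⟩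
    · rintro ⟨e, h⟩; exact ⟨e, by omega⟩
  · apply row_zero
    rintro w ⟨e, h⟩
    omega

theorem canB_mulVec {h : ℕ} {rr : Fin h → ℕ} (v : PencilIdx h rr → ℂ) (i : Fin h)
    (p : Fin (2 * rr i + 1)) :
    (canB h rr).mulVec v ⟨i, p⟩ =
      if (p : ℕ) < rr i then pV v i (p + rr i + 1)
      else if rr i < (p : ℕ) then pV v i (p - rr i - 1) else 0 := by
  have hp := p.2
  simp only [Matrix.mulVec, dotProduct, canB, Matrix.of_apply]
  split_ifs with h1 h2
  · apply row_sum _ _ _ _ (by omega)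
    intro w
    constructor
    · rintro ⟨e, h⟩; exact ⟨e, by omega⟩
    · rintro ⟨e, h⟩; exact ⟨e, by omega⟩
  · apply row_sum _ _ _ _ (by omega)
    intro w
    constructor
    · rintro ⟨e, h⟩; exact ⟨e, by omega⟩
    · rintro ⟨e, h⟩; exact ⟨e, by omega⟩
  · apply row_zero
    rintro w ⟨e, h⟩
    omega

theorem canA_symm (h : ℕ) (rr : Fin h → ℕ) : (canA h rr).IsSymm := by
  ext u v
  simp only [Matrix.transpose_apply, canA, Matrix.of_apply]
  congr 1
  apply propext
  constructor
  · rintro ⟨e, h⟩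
    refine ⟨e.symm, ?_⟩
    have e' := congrArg rr e
    omega
  · rintro ⟨e, h⟩
    refine ⟨e.symm, ?_⟩
    have e' := congrArg rr e
    omega

theorem canB_symm (h : ℕ) (rr : Fin h → ℕ) : (canB h rr).IsSymm := by
  ext u v
  simp only [Matrix.transpose_apply, canB, Matrix.of_apply]
  congr 1
  apply propext
  constructor
  · rintro ⟨e, h⟩
    refine ⟨e.symm, ?_⟩
    have e' := congrArg rr e
    omega
  · rintro ⟨e, h⟩
    refine ⟨e.symm, ?_⟩
    have e' := congrArg rr e
    omega

theorem can_ker {h : ℕ} {rr : Fin h → ℕ} (hpos : ∀ i, 1 ≤ rr i) (v : PencilIdx h rr → ℂ)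
    (hA : (canA h rr).mulVec v = 0) (hB : (canB h rr).mulVec v = 0) : v = 0 := by
  ext ⟨i, p⟩
  have hp := p.2
  have hi := hpos i
  rw [← pV_coe v]
  by_cases h1 : (p : ℕ) < rr i
  · have := congrFun hA ⟨i, ⟨p + rr i, by omega⟩⟩
    rw [canA_mulVec, if_neg (by simp), if_pos (by simp; omega)] at this
    simpa using this
  · by_cases h2 : (p : ℕ) < 2 * rr i
    · have := congrFun hA ⟨i, ⟨p - rr i, by omega⟩⟩
      rw [canA_mulVec, if_pos (by simp; omega)] at this
      simp only at this
      rwa [Nat.sub_add_cancel (by omega)] at this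
    · have := congrFun hB ⟨i, ⟨rr i - 1, by omega⟩⟩
      rw [canB_mulVec, if_pos (by simp; omega)] at this
      simp only at this
      rwa [show rr i - 1 + rr i + 1 = (p : ℕ) by omega] at this

theorem symm_range_sup {n : Type*} [Fintype n] [DecidableEq n] (A B : Matrix n n ℂ)
    (hA : A.IsSymm) (hB : B.IsSymm)
    (hk : ∀ v : n → ℂ, A.mulVec v = 0 → B.mulVec v = 0 → v = 0) :
    LinearMap.range A.mulVecLin ⊔ LinearMap.range B.mulVecLin = ⊤ := by
  by_contra hne
  obtain ⟨f, hf, hle⟩ := Submodule.exists_le_ker_of_lt_top _ (lt_top_iff_ne_top.2 hne)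
  apply hf
  set c : n → ℂ := fun j => f (Pi.single j 1) with hc
  have hfc : ∀ w, f w = w ⬝ᵥ c := by
    intro w
    conv_lhs => rw [pi_eq_sum_univ' w]
    simp [dotProduct, hc, Pi.single_apply, map_sum]
  have key : ∀ M : Matrix n n ℂ, M.IsSymm → LinearMap.range M.mulVecLin ≤ LinearMap.ker f →
      M.mulVec c = 0 := by
    intro M hM hl
    ext j
    have : f (M.mulVecLin (Pi.single j 1)) = 0 := hl ⟨_, rfl⟩
    rw [hfc] at this
    rw [Matrix.mulVecLin_apply, Matrix.mulVec_single_one] at this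
    simp only [Matrix.mulVec, Pi.zero_apply]
    rw [← this]
    conv_lhs => rw [← hM.eq]
    rfl
  have hc0 := hk c (key A hA (le_sup_left.trans hle)) (key B hB (le_sup_right.trans hle))
  ext w
  simp [hfc, hc0]

/-- Parametrization of the kernel. -/
noncomputable def kerMap {h : ℕ} (rr : Fin h → ℕ) (a b : ℂ) :
    (Fin h → ℂ) →ₗ[ℂ] (PencilIdx h rr → ℂ) where
  toFun c := fun u => if (u.2 : ℕ) < rr u.1 then 0
    else c u.1 * (b ^ (2 * rr u.1 - u.2) * (-a) ^ ((u.2 : ℕ) - rr u.1))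
  map_add' c d := by
    ext u
    simp only [Pi.add_apply]
    split_ifs <;> ring
  map_smul' k c := by
    ext u
    simp only [Pi.smul_apply, smul_eq_mul, RingHom.id_apply]
    split_ifs <;> ring

theorem pV_kerMap {h : ℕ} (rr : Fin h → ℕ) (a b : ℂ) (c : Fin h → ℂ) (i : Fin h) (n : ℕ)
    (hn : n ≤ 2 * rr i) :
    pV (kerMap rr a b c) i n = if n < rr i then 0
      else c i * (b ^ (2 * rr i - n) * (-a) ^ (n - rr i)) := by
  simp [pV, kerMap, Nat.lt_succ_of_le hn]

theorem pencil_mulVec {h : ℕ} {rr : Fin h → ℕ} (a b : ℂ) (v : PencilIdx h rr → ℂ)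
    (u : PencilIdx h rr) : (a • canA h rr + b • canB h rr).mulVec v u =
      a * (canA h rr).mulVec v u + b * (canB h rr).mulVec v u := by
  simp [Matrix.add_mulVec, Matrix.smul_mulVec]

theorem kerMap_mem {h : ℕ} (rr : Fin h → ℕ) (a b : ℂ) (c : Fin h → ℂ) :
    (a • canA h rr + b • canB h rr).mulVec (kerMap rr a b c) = 0 := by
  ext ⟨i, p⟩
  have hp := p.2
  rw [pencil_mulVec, canA_mulVec, canB_mulVec]
  by_cases h1 : (p : ℕ) < rr i
  · rw [if_pos h1, if_pos h1, pV_kerMap _ _ _ _ _ _ (by omega), pV_kerMap _ _ _ _ _ _ (by omega),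
      if_neg (by omega), if_neg (by omega),
      show 2 * rr i - (p + rr i) = (2 * rr i - (p + rr i + 1)) + 1 by omega,
      show (p : ℕ) + rr i + 1 - rr i = (p + rr i - rr i) + 1 by omega]
    simp only [Pi.zero_apply]
    ring
  · rw [if_neg h1, if_neg h1, pV_kerMap _ _ _ _ _ _ (by omega), pV_kerMap _ _ _ _ _ _ (by omega)]
    split_ifs <;> first | omega | simp

theorem kerMap_inj {h : ℕ} (rr : Fin h → ℕ) (a b : ℂ) (hab : ¬(a = 0 ∧ b = 0)) :
    Function.Injective (kerMap rr a b) := by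
  rw [← LinearMap.ker_eq_bot, LinearMap.ker_eq_bot']
  intro c hc
  ext i
  by_cases ha : a = 0
  · have hb : b ≠ 0 := fun hb => hab ⟨ha, hb⟩
    have := pV_kerMap rr a b c i (rr i) (by omega)
    rw [hc] at this
    simpa [pV, hb] using this
  · have := pV_kerMap rr a b c i (2 * rr i) (by omega)
    rw [hc, if_neg (by omega)] at this
    simpa [pV, ha] using this

theorem ker_sub {h : ℕ} (rr : Fin h → ℕ) (a b : ℂ) (hab : ¬(a = 0 ∧ b = 0))
    (v : PencilIdx h rr → ℂ) (hv : (a • canA h rr + b • canB h rr).mulVec v = 0) :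
    v ∈ LinearMap.range (kerMap rr a b) := by
  have e1 : ∀ i n, n < rr i → a * pV v i (rr i + n) + b * pV v i (rr i + n + 1) = 0 := by
    intro i n hn
    have := congrFun hv ⟨i, ⟨n, by omega⟩⟩
    rw [pencil_mulVec, canA_mulVec, canB_mulVec, if_pos hn, if_pos hn] at this
    simpa [add_comm n] using this
  have e2 : ∀ i, 0 < rr i → a * pV v i 0 = 0 := by
    intro i hi
    have := congrFun hv ⟨i, ⟨rr i, by omega⟩⟩
    rw [pencil_mulVec, canA_mulVec, canB_mulVec] at this
    simpa [hi] using this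
  have e3 : ∀ i n, n + 1 < rr i → a * pV v i (n + 1) + b * pV v i n = 0 := by
    intro i n hn
    have := congrFun hv ⟨i, ⟨rr i + (n + 1), by omega⟩⟩
    rw [pencil_mulVec, canA_mulVec, canB_mulVec] at this
    simp only at this
    rw [if_neg (by omega), if_pos (by omega), if_neg (by omega), if_pos (by omega),
      show rr i + (n + 1) - rr i = n + 1 by omega, Nat.add_sub_cancel] at this
    simpa using this
  have e4 : ∀ i, 0 < rr i → b * pV v i (rr i - 1) = 0 := by
    intro i hi
    have := congrFun hv ⟨i, ⟨2 * rr i, by omega⟩⟩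
    rw [pencil_mulVec, canA_mulVec, canB_mulVec] at this
    simp only at this
    rw [if_neg (by omega), if_neg (by omega), if_neg (by omega), if_pos (by omega),
      show 2 * rr i - rr i - 1 = rr i - 1 by omega] at this
    simpa using this
  -- reduction to coordinates
  suffices H : ∃ c : Fin h → ℂ, ∀ i, (∀ n, n < rr i → pV v i n = 0) ∧
      ∀ n m, n + m = rr i → pV v i (rr i + n) = c i * (b ^ m * (-a) ^ n) by
    obtain ⟨c, hc⟩ := H
    refine ⟨c, ?_⟩
    ext ⟨i, p⟩
    have hp := p.2
    rw [← pV_coe (kerMap rr a b c), ← pV_coe v, pV_kerMap _ _ _ _ _ _ (by omega)]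
    split_ifs with h1
    · exact ((hc i).1 p h1).symm
    · rw [← (hc i).2 (p - rr i) (2 * rr i - p) (by omega)]
      congr 1
      omega
  by_cases ha : a = 0
  · have hb : b ≠ 0 := fun hb => hab ⟨ha, hb⟩
    subst ha
    refine ⟨fun i => pV v i (rr i) / b ^ rr i, fun i => ⟨?_, ?_⟩⟩
    · intro n hn
      by_cases h1 : n + 1 < rr i
      · simpa [hb] using e3 i n h1
      · have := e4 i (by omega)
        rw [show rr i - 1 = n by omega] at this
        simpa [hb] using this
    · rintro (_ | n) m hm
      · have : m = rr i := by omega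
        subst this
        simp [hb]
      · have := e1 i n (by omega)
        simpa [hb, add_assoc] using this
  · refine ⟨fun i => pV v i (2 * rr i) / (-a) ^ rr i, fun i => ⟨?_, ?_⟩⟩
    · intro n
      induction n with
      | zero => intro hn; simpa [ha] using e2 i hn
      | succ n ih =>
        intro hn
        have := e3 i n hn
        rw [ih (by omega)] at this
        simpa [ha] using this
    · intro n m
      induction m generalizing n with
      | zero =>
        intro hm
        have : n = rr i := by omega
        subst this
        rw [← two_mul]
        have hne : (-a) ^ rr i ≠ 0 := pow_ne_zero _ (neg_ne_zero.2 ha)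
        rw [pow_zero, one_mul, div_mul_cancel₀ _ hne]
      | succ m ih =>
        intro hm
        have h1 := e1 i n (by omega)
        rw [add_assoc, ih (n + 1) (by omega)] at h1
        apply mul_left_cancel₀ ha
        rw [eq_neg_of_add_eq_zero_left h1]
        ring

theorem idx_card (h : ℕ) (rr : Fin h → ℕ) :
    Fintype.card (PencilIdx h rr) = 2 * ∑ i, rr i + h := by
  simp [Fintype.card_sigma, Finset.sum_add_distrib, Finset.mul_sum]

theorem can_rank {h : ℕ} (rr : Fin h → ℕ) (a b : ℂ) (hab : ¬(a = 0 ∧ b = 0)) :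
    (a • canA h rr + b • canB h rr).rank = 2 * ∑ i, rr i := by
  have hk : LinearMap.ker (a • canA h rr + b • canB h rr).mulVecLin
      = LinearMap.range (kerMap rr a b) := by
    apply le_antisymm
    · intro v hv
      exact ker_sub rr a b hab v hv
    · rintro _ ⟨c, rfl⟩
      exact kerMap_mem rr a b c
  have h1 := LinearMap.finrank_range_add_finrank_ker (a • canA h rr + b • canB h rr).mulVecLin
  rw [hk, LinearMap.finrank_range_of_inj (kerMap_inj rr a b hab)] at h1
  rw [Module.finrank_fintype_fun_eq_card, Module.finrank_fintype_fun_eq_card, idx_card,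
    Fintype.card_fin] at h1
  unfold Matrix.rank
  omega

/-- The canonical pencil of a partition `(r₁, …, r_h)` of `r` has
constant rank `2r` and is non-degenerate; in particular, for every `r ≥ 1` and every
`N` with `2r ≤ N ≤ 3r − 1` there is a non-degenerate pencil of complex symmetric
matrices of size `N + 1` and constant rank `2r`. -/
theorem canonical_pencil_constant_rank_nondegenerate
    (h : ℕ) (hh : 1 ≤ h) (rr : Fin h → ℕ) (hmono : Monotone rr) (hpos : ∀ i, 1 ≤ rr i)
    (r : ℕ) (hsum : ∑ i, rr i = r) :
    (∀ a b : ℂ, ¬(a = 0 ∧ b = 0) → (a • canA h rr + b • canB h rr).rank = 2 * r) ∧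
    (∀ v : PencilIdx h rr → ℂ,
      (canA h rr).mulVec v = 0 → (canB h rr).mulVec v = 0 → v = 0) ∧
    (LinearMap.range (canA h rr).mulVecLin ⊔ LinearMap.range (canB h rr).mulVecLin = ⊤) ∧
    (∀ r' N' : ℕ, 1 ≤ r' → 2 * r' ≤ N' → N' ≤ 3 * r' - 1 →
      ∃ A B : Matrix (Fin (N' + 1)) (Fin (N' + 1)) ℂ, A.IsSymm ∧ B.IsSymm ∧
        (∀ a b : ℂ, ¬(a = 0 ∧ b = 0) → (a • A + b • B).rank = 2 * r') ∧
        (∀ v : Fin (N' + 1) → ℂ, A.mulVec v = 0 → B.mulVec v = 0 → v = 0) ∧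
        LinearMap.range A.mulVecLin ⊔ LinearMap.range B.mulVecLin = ⊤) := by
  subst hsum
  refine ⟨fun a b hab => can_rank rr a b hab, can_ker hpos,
    symm_range_sup _ _ (canA_symm h rr) (canB_symm h rr) (can_ker hpos), ?_⟩
  intro r' N' hr h1 h2
  obtain ⟨k, rfl⟩ : ∃ k, N' = 2 * r' + k := ⟨N' - 2 * r', by omega⟩
  set ss : Fin (k + 1) → ℕ := Fin.cons (r' - k) (fun _ => 1) with hss
  have hs : ∑ i, ss i = r' := by
    rw [Fin.sum_univ_succ]
    simp [hss]
    omega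
  have hp : ∀ i, 1 ≤ ss i := by
    intro i
    refine Fin.cases ?_ (fun j => ?_) i
    · simp [hss]; omega
    · simp [hss]
  let e : PencilIdx (k + 1) ss ≃ Fin (2 * r' + k + 1) :=
    Fintype.equivFinOfCardEq (by rw [idx_card, hs]; ring)
  have hA : ((canA (k + 1) ss).submatrix e.symm e.symm).IsSymm :=
    (canA_symm _ ss).submatrix _
  have hB : ((canB (k + 1) ss).submatrix e.symm e.symm).IsSymm :=
    (canB_symm _ ss).submatrix _
  have hK : ∀ v : Fin (2 * r' + k + 1) → ℂ,
      ((canA (k + 1) ss).submatrix e.symm e.symm).mulVec v = 0 →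
      ((canB (k + 1) ss).submatrix e.symm e.symm).mulVec v = 0 → v = 0 := by
    intro v hv1 hv2
    rw [Matrix.submatrix_mulVec_equiv] at hv1 hv2
    have : v ∘ e = 0 := by
      apply can_ker hp
      · ext u; simpa using congrFun hv1 (e u)
      · ext u; simpa using congrFun hv2 (e u)
    ext j
    simpa using congrFun this (e.symm j)
  refine ⟨_, _, hA, hB, ?_, hK, symm_range_sup _ _ hA hB hK⟩
  intro a b hab
  have := can_rank ss a b hab
  rw [hs] at this
  exact (Matrix.rank_submatrix (a • canA (k + 1) ss + b • canB (k + 1) ss) e.symm e.symm).trans this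
end

section
/- Let r ≥ 1 and h ≥ 1 be integers, and let (r₁,…,r_h) and (s₁,…,s_h) be two non-decreasing sequences of positive integers each summing to r. Let (𝒜, ℬ) and (𝒜′, ℬ′) be the canonical matrices associated to (r₁,…,r_h) and (s₁,…,s_h) respectively (both of size N+1 = 2r+h). If there exists an invertible complex (N+1)×(N+1) matrix P such that the ℂ-linear span of {Pᵀ𝒜P, PᵀℬP} equals the ℂ-linear span of {𝒜′, ℬ′}, then rᵢ = sᵢ for every i = 1,…,h. -/
open Matrix

lemma cp_mulVec_single {ι : Type*} [Fintype ι] (M : Matrix ι ι ℂ) (w : ι → ℂ) (u v0 : ι)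
    (h1 : M u v0 = 1) (h0 : ∀ v, M u v ≠ 0 → v = v0) : (M *ᵥ w) u = w v0 := by
  classical
  rw [Matrix.mulVec, dotProduct, Fintype.sum_eq_single v0, h1, one_mul]
  intro v hv
  by_cases h : M u v = 0
  · rw [h, zero_mul]
  · exact absurd (h0 v h) hv

lemma cp_mulVec_zero {ι : Type*} [Fintype ι] (M : Matrix ι ι ℂ) (w : ι → ℂ) (u : ι)
    (h0 : ∀ v, M u v = 0) : (M *ᵥ w) u = 0 := by
  rw [Matrix.mulVec, dotProduct]
  exact Finset.sum_eq_zero fun v _ => by rw [h0 v, zero_mul]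

section rows
variable {h : ℕ} {rr : Fin h → ℕ} (w : PencilIdx h rr → ℂ) (i : Fin h)

lemma cpA_low (p : ℕ) (hp : p < rr i) :
    (canA h rr *ᵥ w) ⟨i, ⟨p, by omega⟩⟩ = w ⟨i, ⟨p + rr i, by omega⟩⟩ := by
  apply cp_mulVec_single
  · simp [canA, hp]
  · rintro ⟨j, q⟩ hv
    simp only [canA, Matrix.of_apply, ne_eq, ite_eq_right_iff, one_ne_zero, imp_false,
      not_not] at hv
    obtain ⟨rfl, hv⟩ := hv
    congr 1
    ext
    simp only at hv ⊢
    omega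

lemma cpA_high (p : ℕ) (hp : p < rr i) :
    (canA h rr *ᵥ w) ⟨i, ⟨p + rr i, by omega⟩⟩ = w ⟨i, ⟨p, by omega⟩⟩ := by
  apply cp_mulVec_single
  · simp [canA, hp]
  · rintro ⟨j, q⟩ hv
    simp only [canA, Matrix.of_apply, ne_eq, ite_eq_right_iff, one_ne_zero, imp_false,
      not_not] at hv
    obtain ⟨rfl, hv⟩ := hv
    congr 1
    ext
    simp only at hv ⊢
    omega

lemma cpA_last :
    (canA h rr *ᵥ w) ⟨i, ⟨2 * rr i, by omega⟩⟩ = 0 := by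
  apply cp_mulVec_zero
  rintro ⟨j, q⟩
  simp only [canA, Matrix.of_apply, ite_eq_right_iff, one_ne_zero, imp_false]
  rintro ⟨rfl, hv⟩
  omega

lemma cpB_low (p : ℕ) (hp : p < rr i) :
    (canB h rr *ᵥ w) ⟨i, ⟨p, by omega⟩⟩ = w ⟨i, ⟨p + rr i + 1, by omega⟩⟩ := by
  apply cp_mulVec_single
  · simp [canB, hp]
  · rintro ⟨j, q⟩ hv
    simp only [canB, Matrix.of_apply, ne_eq, ite_eq_right_iff, one_ne_zero, imp_false,
      not_not] at hv
    obtain ⟨rfl, hv⟩ := hv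
    congr 1
    ext
    simp only at hv ⊢
    omega

lemma cpB_high (p : ℕ) (hp : p < rr i) :
    (canB h rr *ᵥ w) ⟨i, ⟨p + rr i + 1, by omega⟩⟩ = w ⟨i, ⟨p, by omega⟩⟩ := by
  apply cp_mulVec_single
  · simp [canB, hp]
  · rintro ⟨j, q⟩ hv
    simp only [canB, Matrix.of_apply, ne_eq, ite_eq_right_iff, one_ne_zero, imp_false,
      not_not] at hv
    obtain ⟨rfl, hv⟩ := hv
    congr 1
    ext
    simp only at hv ⊢
    omega

lemma cpB_mid :
    (canB h rr *ᵥ w) ⟨i, ⟨rr i, by omega⟩⟩ = 0 := by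
  apply cp_mulVec_zero
  rintro ⟨j, q⟩
  simp only [canB, Matrix.of_apply, ite_eq_right_iff, one_ne_zero, imp_false]
  rintro ⟨rfl, hv⟩
  omega

end rows

/-- The kernel of `A - t B`. -/
noncomputable def cpK (h : ℕ) (rr : Fin h → ℕ) (t : ℂ) : Submodule ℂ (PencilIdx h rr → ℂ) :=
  LinearMap.ker (Matrix.mulVecLin (canA h rr - t • canB h rr))

lemma mem_cpK {h : ℕ} {rr : Fin h → ℕ} {t : ℂ} {w : PencilIdx h rr → ℂ} :
    w ∈ cpK h rr t ↔ ∀ u, (canA h rr *ᵥ w) u = t * (canB h rr *ᵥ w) u := by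
  simp only [cpK, LinearMap.mem_ker, Matrix.mulVecLin_apply, Matrix.sub_mulVec,
    Matrix.smul_mulVec, funext_iff, Pi.sub_apply, Pi.smul_apply, smul_eq_mul, Pi.zero_apply,
    sub_eq_zero]

lemma cpK_low {h : ℕ} {rr : Fin h → ℕ} {t : ℂ} {w : PencilIdx h rr → ℂ}
    (hw : w ∈ cpK h rr t) (i : Fin h) (p : ℕ) (hp : p < rr i) :
    w ⟨i, ⟨p, by omega⟩⟩ = 0 := by
  rw [mem_cpK] at hw
  induction p with
  | zero =>
    have := hw ⟨i, ⟨0 + rr i, by omega⟩⟩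
    rw [cpA_high w i 0 hp] at this
    rw [this]
    simp only [Nat.zero_add]
    rw [cpB_mid, mul_zero]
  | succ p ih =>
    have := hw ⟨i, ⟨p + 1 + rr i, by omega⟩⟩
    rw [cpA_high w i (p+1) hp] at this
    rw [this]
    have e : (⟨i, ⟨p + 1 + rr i, by omega⟩⟩ : PencilIdx h rr) = ⟨i, ⟨p + rr i + 1, by omega⟩⟩ := by
      congr 2; omega
    rw [e, cpB_high w i p (by omega), ih (by omega), mul_zero]

lemma cpK_high {h : ℕ} {rr : Fin h → ℕ} {t : ℂ} {w : PencilIdx h rr → ℂ}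
    (hw : w ∈ cpK h rr t) (i : Fin h) (m : ℕ) (hm : m ≤ rr i) :
    w ⟨i, ⟨2 * rr i - m, by omega⟩⟩ = t ^ m * w ⟨i, ⟨2 * rr i, by omega⟩⟩ := by
  induction m with
  | zero => simp
  | succ m ih =>
    have := mem_cpK.1 hw ⟨i, ⟨rr i - (m + 1), by omega⟩⟩
    rw [cpA_low w i _ (by omega), cpB_low w i _ (by omega)] at this
    have e1 : (⟨i, ⟨rr i - (m + 1) + rr i, by omega⟩⟩ : PencilIdx h rr)
      = ⟨i, ⟨2 * rr i - (m + 1), by omega⟩⟩ := by congr 2; omega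
    have e2 : (⟨i, ⟨rr i - (m + 1) + rr i + 1, by omega⟩⟩ : PencilIdx h rr)
      = ⟨i, ⟨2 * rr i - m, by omega⟩⟩ := by congr 2; omega
    rw [e1, e2, ih (by omega)] at this
    rw [this]; ring

/-- The vector with prescribed last coordinates. -/
noncomputable def cpV (h : ℕ) (rr : Fin h → ℕ) (t : ℂ) (c : Fin h → ℂ) : PencilIdx h rr → ℂ :=
  fun u => if (u.2 : ℕ) < rr u.1 then 0 else t ^ (2 * rr u.1 - u.2) * c u.1

lemma cpV_mem (h : ℕ) (rr : Fin h → ℕ) (t : ℂ) (c : Fin h → ℂ) : cpV h rr t c ∈ cpK h rr t := by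
  rw [mem_cpK]
  rintro ⟨i, q, hq⟩
  rcases lt_or_ge q (rr i) with h1 | h1
  · rw [cpA_low _ i q h1, cpB_low _ i q h1]
    have h2 : ¬ (q + rr i + 1 < rr i) := by omega
    have h3 : ¬ (q + rr i < rr i) := by omega
    have h4 : 2 * rr i - (q + rr i) = (2 * rr i - (q + rr i + 1)) + 1 := by omega
    simp only [cpV, h2, h3, if_false, h4, pow_succ]
    ring
  · have hA : (canA h rr *ᵥ cpV h rr t c) ⟨i, ⟨q, hq⟩⟩ = 0 := by
      rcases lt_or_ge q (2 * rr i) with h2 | h2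
      · obtain ⟨p, rfl⟩ := Nat.exists_eq_add_of_le' h1
        have : p < rr i := by omega
        rw [cpA_high _ i p this]
        simp [cpV, this]
      · obtain rfl : q = 2 * rr i := by omega
        exact cpA_last _ i
    have hB : (canB h rr *ᵥ cpV h rr t c) ⟨i, ⟨q, hq⟩⟩ = 0 := by
      rcases eq_or_lt_of_le h1 with h2 | h2
      · subst h2
        exact cpB_mid _ i
      · obtain ⟨p, rfl⟩ := Nat.exists_eq_add_of_le' (Nat.succ_le_of_lt h2)
        have : p < rr i := by omega
        have := cpB_high (cpV h rr t c) i p this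
        simp only [Nat.succ_eq_add_one, ← add_assoc]
        rw [this]
        simp [cpV, show p < rr i by omega]
    rw [hA, hB, mul_zero]

lemma cpK_eq {h : ℕ} {rr : Fin h → ℕ} {t : ℂ} {w : PencilIdx h rr → ℂ}
    (hw : w ∈ cpK h rr t) : w = cpV h rr t (fun i => w ⟨i, ⟨2 * rr i, by omega⟩⟩) := by
  funext ⟨i, q, hq⟩
  rcases lt_or_ge q (rr i) with h1 | h1
  · rw [cpK_low hw i q h1]; simp [cpV, h1]
  · have := cpK_high hw i (2 * rr i - q) (by omega)
    have e : (⟨i, ⟨2 * rr i - (2 * rr i - q), by omega⟩⟩ : PencilIdx h rr) = ⟨i, ⟨q, hq⟩⟩ := by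
      congr 2; omega
    rw [e] at this
    rw [this]
    simp [cpV, not_lt.2 h1]

/-- Extend by zero. -/
noncomputable def cpExt (h : ℕ) (rr : Fin h → ℕ) (k : ℕ) (c : {i : Fin h // rr i < k} → ℂ) :
    Fin h → ℂ := fun i => if hi : rr i < k then c ⟨i, hi⟩ else 0

/-- Parametrization of the intersection. -/
noncomputable def cpL (h : ℕ) (rr : Fin h → ℕ) (t : ℂ) (k : ℕ) :
    ({i : Fin h // rr i < k} → ℂ) →ₗ[ℂ] (PencilIdx h rr → ℂ) where
  toFun c := cpV h rr t (cpExt h rr k c)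
  map_add' c d := by
    funext u
    simp only [cpV, cpExt, Pi.add_apply]
    split_ifs <;> simp [mul_add]
  map_smul' a c := by
    funext u
    simp only [cpV, cpExt, Pi.smul_apply, smul_eq_mul, RingHom.id_apply]
    split_ifs <;> ring

lemma cpL_inj (h : ℕ) (rr : Fin h → ℕ) (hpos : ∀ i, 1 ≤ rr i) (t : ℂ) (k : ℕ) :
    Function.Injective (cpL h rr t k) := by
  intro c d hcd
  funext ⟨i, hi⟩
  have := congrFun hcd ⟨i, ⟨2 * rr i, by omega⟩⟩
  have h1 := hpos i
  have h2 : ¬ (2 * rr i < rr i) := by omega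
  simpa [cpL, cpV, cpExt, h2, hi] using this

open Polynomial in
/-- functional attached to a polynomial -/
noncomputable def cpF (h : ℕ) (rr : Fin h → ℕ) (i : Fin h) (p : ℂ[X]) :
    (PencilIdx h rr → ℂ) →ₗ[ℂ] ℂ :=
  ∑ m ∈ Finset.range (rr i + 1),
    p.coeff m • LinearMap.proj (⟨i, ⟨2 * rr i - m, by omega⟩⟩ : PencilIdx h rr)

open Polynomial in
lemma cpF_apply {h : ℕ} {rr : Fin h → ℕ} (i : Fin h) (p : ℂ[X]) (hp : p.natDegree ≤ rr i) {t : ℂ}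
    {w : PencilIdx h rr → ℂ} (hw : w ∈ cpK h rr t) :
    cpF h rr i p w = p.eval t * w ⟨i, ⟨2 * rr i, by omega⟩⟩ := by
  rw [Polynomial.eval_eq_sum_range' (Nat.lt_succ_of_le hp), Finset.sum_mul]
  simp only [cpF, LinearMap.sum_apply, LinearMap.smul_apply, LinearMap.proj_apply, smul_eq_mul]
  refine Finset.sum_congr rfl fun m hm => ?_
  rw [cpK_high hw i m (by simpa [Nat.lt_succ_iff] using hm)]
  ring

open Polynomial in
lemma cp_inter (h : ℕ) (rr : Fin h → ℕ) (T : Finset ℂ) (t : ℂ) (ht : t ∉ T) :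
    (⨆ s ∈ T, cpK h rr s) ⊓ cpK h rr t = LinearMap.range (cpL h rr t T.card) := by
  apply le_antisymm
  · rintro w ⟨hw1, hw⟩
    refine ⟨fun i => w ⟨i.1, ⟨2 * rr i.1, by omega⟩⟩, ?_⟩
    conv_rhs => rw [cpK_eq hw]
    change cpV h rr t _ = _
    congr 1
    funext i
    simp only [cpExt]
    split_ifs with hi
    · rfl
    · let p : ℂ[X] := ∏ s ∈ T, (X - C s)
      have hp : p.natDegree ≤ rr i := by
        rw [Polynomial.natDegree_prod_of_monic _ _ (fun s _ => monic_X_sub_C s)]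
        simpa using hi
      have hker : (⨆ s ∈ T, cpK h rr s) ≤ LinearMap.ker (cpF h rr i p) := by
        refine iSup₂_le fun s hs v hv => ?_
        rw [LinearMap.mem_ker, cpF_apply i p hp hv]
        have : p.eval s = 0 := by
          rw [Polynomial.eval_prod]
          exact Finset.prod_eq_zero hs (by simp)
        rw [this, zero_mul]
      have h0 := hker hw1
      rw [LinearMap.mem_ker, cpF_apply i p hp hw] at h0
      have hne : p.eval t ≠ 0 := by
        rw [Polynomial.eval_prod]
        refine Finset.prod_ne_zero_iff.2 fun s hs => ?_
        simp only [eval_sub, eval_X, eval_C, ne_eq, sub_eq_zero]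
        rintro rfl
        exact ht hs
      exact ((mul_eq_zero.1 h0).resolve_left hne).symm
  · rintro _ ⟨c, rfl⟩
    refine ⟨?_, cpV_mem _ _ _ _⟩
    have key : cpL h rr t T.card c = ∑ s ∈ T,
        (Lagrange.basis T id s).eval t • cpV h rr s (cpExt h rr T.card c) := by
      funext ⟨i, q, hq⟩
      simp only [cpL, LinearMap.coe_mk, AddHom.coe_mk, Finset.sum_apply, Pi.smul_apply, smul_eq_mul,
        cpV, cpExt]
      split_ifs with h1 h2
      · simp
      · have hdeg : (X ^ (2 * rr i - q) : ℂ[X]).degree < T.card := by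
          rw [degree_X_pow]
          exact_mod_cast (by omega : 2 * rr i - q < T.card)
        have := Lagrange.eq_interpolate (s := T) (v := id) (f := (X ^ (2 * rr i - q) : ℂ[X]))
          (Set.injOn_id _) hdeg
        have h3 := congrArg (Polynomial.eval t) this
        rw [Lagrange.interpolate_apply, Polynomial.eval_finsetSum] at h3
        simp only [eval_pow, eval_X, eval_mul, eval_C, id] at h3
        rw [h3, Finset.sum_mul]
        refine Finset.sum_congr rfl fun s _ => ?_
        ring
      · simp
    rw [key]
    refine Submodule.sum_mem _ fun s hs => Submodule.smul_mem _ _ ?_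
    exact Submodule.mem_iSup_of_mem s (Submodule.mem_iSup_of_mem hs (cpV_mem _ _ _ _))

lemma cp_finrank (h : ℕ) (rr : Fin h → ℕ) (hpos : ∀ i, 1 ≤ rr i) (T : Finset ℂ) (t : ℂ)
    (ht : t ∉ T) :
    Module.finrank ℂ ((⨆ s ∈ T, cpK h rr s) ⊓ cpK h rr t : Submodule ℂ (PencilIdx h rr → ℂ))
      = (Finset.univ.filter fun i => rr i < T.card).card := by
  rw [cp_inter h rr T t ht, LinearMap.finrank_range_of_inj (cpL_inj h rr hpos t _),
    Module.finrank_fintype_fun_eq_card, Fintype.card_subtype]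

lemma cp_le {h : ℕ} {rr ss : Fin h → ℕ} (hrmono : Monotone rr) (hsmono : Monotone ss)
    (hc : ∀ k, (Finset.univ.filter fun i => rr i < k).card
      = (Finset.univ.filter fun i => ss i < k).card) (i : Fin h) : ss i ≤ rr i := by
  by_contra! hlt
  have h1 : Finset.univ.filter (fun j => ss j < ss i) ⊆ Finset.Iio i := by
    intro j hj
    simp only [Finset.mem_filter, Finset.mem_univ, true_and, Finset.mem_Iio] at hj ⊢
    by_contra! hij
    exact absurd (hsmono hij) (not_le.2 hj)
  have h2 : Finset.Iic i ⊆ Finset.univ.filter (fun j => rr j < ss i) := by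
    intro j hj
    simp only [Finset.mem_filter, Finset.mem_univ, true_and, Finset.mem_Iic] at hj ⊢
    exact (hrmono hj).trans_lt hlt
  have h3 := Finset.card_le_card h1
  have h4 := Finset.card_le_card h2
  rw [hc] at h4
  simp only [Fin.card_Iio, Fin.card_Iic] at h3 h4
  omega

lemma cp_indep {h : ℕ} (hh : 1 ≤ h) {ss : Fin h → ℕ} (hpos : ∀ i, 1 ≤ ss i) (a b : ℂ)
    (hab : a • canA h ss + b • canB h ss = 0) : a = 0 ∧ b = 0 := by
  let i : Fin h := ⟨0, hh⟩
  have hi := hpos i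
  have hi' : 0 < ss i := hi
  have hi'' : ss i ≠ 0 := by omega
  have h1 := congrFun (congrFun hab ⟨i, ⟨0, by omega⟩⟩) ⟨i, ⟨ss i, by omega⟩⟩
  have h2 := congrFun (congrFun hab ⟨i, ⟨0, by omega⟩⟩) ⟨i, ⟨ss i + 1, by omega⟩⟩
  constructor
  · simpa [canA, canB, hi', hi''] using h1
  · simpa [canA, canB, hi', hi''] using h2

/-- Two canonical pencils with the same number of parts `h` and the
same total `r` are congruent only if the partitions coincide. -/
theorem canonical_pencils_congruent_iff_same_partition
    (r h : ℕ) (hr : 1 ≤ r) (hh : 1 ≤ h)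
    (rr ss : Fin h → ℕ) (hrmono : Monotone rr) (hsmono : Monotone ss)
    (hrpos : ∀ i, 1 ≤ rr i) (hspos : ∀ i, 1 ≤ ss i)
    (hrsum : ∑ i, rr i = r) (hssum : ∑ i, ss i = r)
    (P : Matrix (PencilIdx h rr) (PencilIdx h ss) ℂ)
    (Q : Matrix (PencilIdx h ss) (PencilIdx h rr) ℂ)
    (hPQ : P * Q = 1) (hQP : Q * P = 1)
    (hspan : Submodule.span ℂ {Pᵀ * canA h rr * P, Pᵀ * canB h rr * P} =
      Submodule.span ℂ {canA h ss, canB h ss}) :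
    rr = ss := by
  have hA : canA h ss ∈ Submodule.span ℂ {Pᵀ * canA h rr * P, Pᵀ * canB h rr * P} := by
    rw [hspan]; exact Submodule.subset_span (by simp)
  have hB : canB h ss ∈ Submodule.span ℂ {Pᵀ * canA h rr * P, Pᵀ * canB h rr * P} := by
    rw [hspan]; exact Submodule.subset_span (by simp)
  obtain ⟨a, b, hA⟩ := Submodule.mem_span_pair.1 hA
  obtain ⟨c, d, hB⟩ := Submodule.mem_span_pair.1 hB
  have hdet : a * d - b * c ≠ 0 := by
    intro h0
    have e1 : d • canA h ss + (-b) • canB h ss = 0 := by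
      have : d • canA h ss + (-b) • canB h ss = (a * d - b * c) • (Pᵀ * canA h rr * P) := by
        rw [← hA, ← hB]; module
      rw [this, h0, zero_smul]
    have e2 : (-c) • canA h ss + a • canB h ss = 0 := by
      have : (-c) • canA h ss + a • canB h ss = (a * d - b * c) • (Pᵀ * canB h rr * P) := by
        rw [← hA, ← hB]; module
      rw [this, h0, zero_smul]
    obtain ⟨-, hb⟩ := cp_indep hh hspos _ _ e1
    obtain ⟨-, ha⟩ := cp_indep hh hspos _ _ e2
    have hb' : b = 0 := by simpa using hb
    rw [ha, hb'] at hA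
    have := cp_indep hh hspos 1 0 (by rw [← hA]; simp)
    exact one_ne_zero this.1
  let e : (PencilIdx h ss → ℂ) ≃ₗ[ℂ] (PencilIdx h rr → ℂ) :=
    LinearEquiv.ofLinearMap (Matrix.mulVecLin P) (Matrix.mulVecLin Q)
      (by rw [← Matrix.mulVecLin_mul, hPQ, Matrix.mulVecLin_one])
      (by rw [← Matrix.mulVecLin_mul, hQP, Matrix.mulVecLin_one])
  let u : ℂ → ℂ := fun t => (t * d - b) / (a - t * c)
  have hPt : ∀ v : PencilIdx h rr → ℂ, Pᵀ *ᵥ v = 0 → v = 0 := by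
    intro v hv
    have : Qᵀ *ᵥ (Pᵀ *ᵥ v) = v := by
      rw [Matrix.mulVec_mulVec, ← Matrix.transpose_mul, hPQ, Matrix.transpose_one,
        Matrix.one_mulVec]
    rw [← this, hv, Matrix.mulVec_zero]
  have hK : ∀ t, a - t * c ≠ 0 → (cpK h ss t).map (e : _ →ₗ[ℂ] _) = cpK h rr (u t) := by
    intro t ht
    have hM : canA h ss - t • canB h ss
        = (a - t * c) • (Pᵀ * (canA h rr - u t • canB h rr) * P) := by
      have : (a - t * c) * u t = t * d - b := by
        simp only [u]; field_simp
      rw [Matrix.mul_sub, Matrix.sub_mul, smul_sub, Matrix.mul_smul, Matrix.smul_mul, smul_smul,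
        this, ← hA, ← hB]
      module
    have hiff : ∀ w, w ∈ cpK h ss t ↔ P *ᵥ w ∈ cpK h rr (u t) := by
      intro w
      simp only [cpK, LinearMap.mem_ker, Matrix.mulVecLin_apply]
      rw [hM, Matrix.smul_mulVec, smul_eq_zero, or_iff_right ht, ← Matrix.mulVec_mulVec,
        ← Matrix.mulVec_mulVec]
      exact ⟨fun h => hPt _ h, fun h => by rw [h, Matrix.mulVec_zero]⟩
    ext v
    constructor
    · rintro ⟨w, hw, rfl⟩
      exact (hiff w).1 hw
    · intro hv
      refine ⟨e.symm v, ?_, e.apply_symm_apply v⟩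
      refine (hiff _).2 ?_
      have : P *ᵥ (e.symm v) = v := e.apply_symm_apply v
      rwa [this]
  have hu : ∀ t t', a - t * c ≠ 0 → a - t' * c ≠ 0 → u t = u t' → t = t' := by
    intro t t' h1 h2 h3
    simp only [u] at h3
    rw [div_eq_div_iff h1 h2] at h3
    have : (a * d - b * c) * (t - t') = 0 := by linear_combination h3
    exact sub_eq_zero.1 ((mul_eq_zero.1 this).resolve_left hdet)
  have hinf : {t : ℂ | a - t * c ≠ 0}.Infinite := by
    have hfin : {t : ℂ | a - t * c ≠ 0}ᶜ.Finite := by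
      refine Set.Subsingleton.finite ?_
      intro t ht t' ht'
      simp only [Set.mem_compl_iff, Set.mem_ofPred_eq, not_not] at ht ht'
      have hc : c ≠ 0 := by
        rintro rfl
        apply hdet
        have : a = 0 := by simpa using ht
        simp [this]
      exact mul_right_cancel₀ hc (by linear_combination ht' - ht)
    intro hf
    exact Set.infinite_univ (α := ℂ) (by simpa using hf.union hfin)
  have hc : ∀ k, (Finset.univ.filter fun i => rr i < k).card
      = (Finset.univ.filter fun i => ss i < k).card := by
    intro k
    obtain ⟨F, hF, hFc⟩ := hinf.exists_subset_card_eq (k + 1)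
    obtain ⟨t, htF⟩ : F.Nonempty := by rw [← Finset.card_pos]; omega
    have hT : (F.erase t).card = k := by rw [Finset.card_erase_of_mem htF]; omega
    have hTg : ∀ s ∈ F.erase t, a - s * c ≠ 0 := fun s hs => hF (Finset.mem_of_mem_erase hs)
    have htg : a - t * c ≠ 0 := hF htF
    have hT' : ((F.erase t).image u).card = k := by
      rw [Finset.card_image_of_injOn, hT]
      intro x hx y hy hxy
      exact hu x y (hTg x hx) (hTg y hy) hxy
    have ht' : u t ∉ (F.erase t).image u := by
      intro hmem
      obtain ⟨s, hs, hst⟩ := Finset.mem_image.1 hmem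
      have := hu s t (hTg s hs) htg hst
      exact Finset.ne_of_mem_erase hs this
    have f1 := cp_finrank h ss hspos (F.erase t) t (Finset.notMem_erase t F)
    have f2 := cp_finrank h rr hrpos ((F.erase t).image u) (u t) ht'
    rw [hT] at f1
    rw [hT'] at f2
    rw [← f1, ← f2, ← LinearEquiv.finrank_map_eq e]
    have hsup : (⨆ s ∈ (F.erase t).image u, cpK h rr s)
        = (⨆ s ∈ F.erase t, cpK h ss s).map (e : _ →ₗ[ℂ] _) := by
      rw [Finset.iSup_finset_image, Submodule.map_iSup]
      refine iSup_congr fun s => ?_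
      rw [Submodule.map_iSup]
      exact iSup_congr fun hs => (hK s (hTg s hs)).symm
    rw [hsup, ← hK t htg, ← Submodule.map_inf _ e.injective]
  funext i
  exact le_antisymm (cp_le hsmono hrmono (fun k => (hc k).symm) i) (cp_le hrmono hsmono hc i)
end

section
/- Let r ≥ 1 be an integer and let 𝒜, ℬ be the corank-one canonical matrices of size 2r+1. For every (a,b) ∈ ℂ² with (a,b) ≠ (0,0), the kernel of a•𝒜 + b•ℬ is exactly the one-dimensional ℂ-linear span of the nonzero vector w(a,b) ∈ ℂ^{2r+1} defined by w(a,b)_j = 0 for 0 ≤ j ≤ r−1 and w(a,b)_{r+i} = (−a)^i · b^{r−i} for 0 ≤ i ≤ r. In particular rank(a•𝒜 + b•ℬ) = 2r for all (a,b) ≠ (0,0). -/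
open Matrix

/-- The first corank-one canonical matrix `𝒜` of size `2r + 1`:
`𝒜_{p, r+p} = 𝒜_{r+p, p} = 1` for `0 ≤ p ≤ r − 1`, all other entries `0`. -/
def corankOneA (r : ℕ) : Matrix (Fin (2 * r + 1)) (Fin (2 * r + 1)) ℂ :=
  Matrix.of fun p q =>
    if ((q : ℕ) = (p : ℕ) + r ∧ (p : ℕ) < r) ∨ ((p : ℕ) = (q : ℕ) + r ∧ (q : ℕ) < r)
    then 1 else 0

/-- The second corank-one canonical matrix `ℬ` of size `2r + 1`:
`ℬ_{p, r+p+1} = ℬ_{r+p+1, p} = 1` for `0 ≤ p ≤ r − 1`, all other entries `0`. -/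
def corankOneB (r : ℕ) : Matrix (Fin (2 * r + 1)) (Fin (2 * r + 1)) ℂ :=
  Matrix.of fun p q =>
    if ((q : ℕ) = (p : ℕ) + r + 1 ∧ (p : ℕ) < r) ∨ ((p : ℕ) = (q : ℕ) + r + 1 ∧ (q : ℕ) < r)
    then 1 else 0

/-- The kernel generator `w(a,b)` of `a𝒜 + bℬ`: `w_j = 0` for `j < r` and
`w_{r+i} = (−a)^i b^{r−i}` for `0 ≤ i ≤ r`. -/
def kerGen (r : ℕ) (a b : ℂ) : Fin (2 * r + 1) → ℂ := fun j =>
  if (j : ℕ) < r then 0 else (-a) ^ ((j : ℕ) - r) * b ^ (2 * r - (j : ℕ))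

def extZ (r : ℕ) (v : Fin (2 * r + 1) → ℂ) (n : ℕ) : ℂ :=
  if h : n < 2 * r + 1 then v ⟨n, h⟩ else 0

theorem extZ_val (r : ℕ) (v : Fin (2 * r + 1) → ℂ) (j : Fin (2 * r + 1)) :
    extZ r v j = v j := by
  unfold extZ
  rw [dif_pos j.2]

theorem sum_ite_extZ (r : ℕ) (v : Fin (2 * r + 1) → ℂ) (P : Fin (2 * r + 1) → Prop)
    [DecidablePred P] (n : ℕ) (hn : n < 2 * r + 1) (hP : ∀ q, P q ↔ (q : ℕ) = n) :
    ∑ q, (if P q then (1 : ℂ) else 0) * v q = extZ r v n := by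
  rw [Finset.sum_eq_single ⟨n, hn⟩]
  · have : P ⟨n, hn⟩ := (hP _).2 rfl
    simp [this, extZ, hn]
  · intro q _ hq
    have : ¬ P q := fun h => hq (Fin.ext ((hP q).1 h))
    simp [this]
  · simp

theorem sum_ite_none (r : ℕ) (v : Fin (2 * r + 1) → ℂ) (P : Fin (2 * r + 1) → Prop)
    [DecidablePred P] (hP : ∀ q, ¬ P q) :
    ∑ q, (if P q then (1 : ℂ) else 0) * v q = 0 := by
  simp [hP]

theorem rowA (r : ℕ) (v : Fin (2 * r + 1) → ℂ) (p : Fin (2 * r + 1)) :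
    (corankOneA r *ᵥ v) p = if (p : ℕ) < r then extZ r v (p + r) else
      if (p : ℕ) < 2 * r then extZ r v (p - r) else 0 := by
  have hp := p.2
  simp only [Matrix.mulVec, dotProduct, corankOneA, Matrix.of_apply]
  split_ifs with h1 h2
  · exact sum_ite_extZ r v _ _ (by omega) (fun q => by omega)
  · exact sum_ite_extZ r v _ _ (by omega) (fun q => by omega)
  · exact sum_ite_none r v _ (fun q => by omega)

theorem rowB (r : ℕ) (v : Fin (2 * r + 1) → ℂ) (p : Fin (2 * r + 1)) :
    (corankOneB r *ᵥ v) p = if (p : ℕ) < r then extZ r v (p + r + 1) else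
      if (p : ℕ) = r then 0 else extZ r v (p - r - 1) := by
  have hp := p.2
  simp only [Matrix.mulVec, dotProduct, corankOneB, Matrix.of_apply]
  split_ifs with h1 h2
  · exact sum_ite_extZ r v _ _ (by omega) (fun q => by omega)
  · exact sum_ite_none r v _ (fun q => by omega)
  · exact sum_ite_extZ r v _ _ (by omega) (fun q => by omega)

theorem row_eq (r : ℕ) (a b : ℂ) (v : Fin (2 * r + 1) → ℂ) (p : Fin (2 * r + 1)) :
    ((a • corankOneA r + b • corankOneB r) *ᵥ v) p =
      a * (if (p : ℕ) < r then extZ r v (p + r) else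
        if (p : ℕ) < 2 * r then extZ r v (p - r) else 0) +
      b * (if (p : ℕ) < r then extZ r v (p + r + 1) else
        if (p : ℕ) = r then 0 else extZ r v (p - r - 1)) := by
  rw [← rowA, ← rowB, Matrix.add_mulVec, Matrix.smul_mulVec, Matrix.smul_mulVec]
  simp

theorem extZ_kerGen (r : ℕ) (a b : ℂ) (n : ℕ) (hn : n < 2 * r + 1) :
    extZ r (kerGen r a b) n = if n < r then 0 else (-a) ^ (n - r) * b ^ (2 * r - n) := by
  simp [extZ, hn, kerGen]

theorem kerGen_mem (r : ℕ) (a b : ℂ) :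
    (a • corankOneA r + b • corankOneB r) *ᵥ kerGen r a b = 0 := by
  funext p
  have hp := p.2
  rw [row_eq]
  by_cases h1 : (p : ℕ) < r
  · rw [if_pos h1, if_pos h1, extZ_kerGen _ _ _ _ (by omega), extZ_kerGen _ _ _ _ (by omega),
      if_neg (by omega), if_neg (by omega)]
    have e1 : (p : ℕ) + r - r = p := by omega
    have e2 : (p : ℕ) + r + 1 - r = p + 1 := by omega
    have e3 : 2 * r - ((p : ℕ) + r) = (2 * r - (p + r + 1)) + 1 := by omega
    rw [e1, e2, e3, pow_succ, pow_succ]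
    simp only [Pi.zero_apply]
    ring
  · rw [if_neg h1, if_neg h1]
    have hA : (if (p : ℕ) < 2 * r then extZ r (kerGen r a b) (p - r) else 0) = 0 := by
      split_ifs with h
      · rw [extZ_kerGen _ _ _ _ (by omega), if_pos (by omega)]
      · rfl
    have hB : (if (p : ℕ) = r then 0 else extZ r (kerGen r a b) (p - r - 1)) = 0 := by
      split_ifs with h
      · rfl
      · rw [extZ_kerGen _ _ _ _ (by omega), if_pos (by omega)]
    rw [hA, hB]; simp

theorem kerGen_ne (r : ℕ) (a b : ℂ) (hab : ¬(a = 0 ∧ b = 0)) : kerGen r a b ≠ 0 := by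
  intro h
  by_cases hb : b = 0
  · have ha : a ≠ 0 := fun ha => hab ⟨ha, hb⟩
    have := congrFun h ⟨2 * r, by omega⟩
    simp [kerGen, ha] at this
    omega
  · have := congrFun h ⟨r, by omega⟩
    simp [kerGen] at this
    exact hb this.1

theorem ker_sub_s5 (r : ℕ) (hr : 1 ≤ r) (a b : ℂ) (hab : ¬(a = 0 ∧ b = 0))
    (v : Fin (2 * r + 1) → ℂ) (hv : (a • corankOneA r + b • corankOneB r) *ᵥ v = 0) :
    ∃ c : ℂ, c • kerGen r a b = v := by
  have H : ∀ p (hp : p < 2 * r + 1), _ := fun p hp =>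
    (row_eq r a b v ⟨p, hp⟩).symm.trans (congrFun hv ⟨p, hp⟩)
  simp only [Pi.zero_apply] at H
  have H1 : ∀ p, p < r → a * extZ r v (p + r) + b * extZ r v (p + r + 1) = 0 := by
    intro p hp
    have := H p (by omega)
    rwa [if_pos hp, if_pos hp] at this
  have H2 : a * extZ r v 0 = 0 := by
    have := H r (by omega)
    rw [if_neg (by omega), if_pos (by omega), if_neg (by omega), if_pos rfl] at this
    simpa using this
  have H3 : ∀ k, k + 1 < r → a * extZ r v (k + 1) + b * extZ r v k = 0 := by
    intro k hk
    have := H (r + k + 1) (by omega)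
    rw [if_neg (by omega), if_pos (by omega), if_neg (by omega), if_neg (by omega)] at this
    have e1 : r + k + 1 - r = k + 1 := by omega
    rwa [e1, Nat.add_sub_cancel] at this
  have H4 : b * extZ r v (r - 1) = 0 := by
    have := H (2 * r) (by omega)
    rw [if_neg (by omega), if_neg (by omega), if_neg (by omega), if_neg (by omega)] at this
    have e1 : 2 * r - r - 1 = r - 1 := by omega
    rw [e1] at this
    simpa using this
  clear H
  by_cases hb : b = 0
  · subst hb
    have ha : a ≠ 0 := fun ha => hab ⟨ha, rfl⟩
    have L : ∀ k, k < r → extZ r v k = 0 := by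
      intro k hk
      rcases k with _ | k
      · simpa [ha] using H2
      · simpa [ha] using H3 k hk
    refine ⟨extZ r v (2 * r) / (-a) ^ r, ?_⟩
    funext j
    have hj := j.2
    rw [← extZ_val r v j]
    simp only [Pi.smul_apply, kerGen, smul_eq_mul]
    split_ifs with h
    · rw [L _ h]; simp
    · by_cases h2 : (j : ℕ) = 2 * r
      · have e : 2 * r - r = r := by omega
        have : (-a) ^ r ≠ 0 := pow_ne_zero _ (neg_ne_zero.2 ha)
        rw [h2, e]; simp [this]
      · have := H1 (j - r) (by omega)
        rw [Nat.sub_add_cancel (by omega)] at this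
        have h3 : extZ r v j = 0 := by simpa [ha] using this
        rw [h3, zero_pow (by omega)]; simp
  · have L : ∀ i, i < r → extZ r v (r - 1 - i) = 0 := by
      intro i
      induction i with
      | zero => intro _; simpa [hb] using H4
      | succ i ih =>
        intro hi
        have h1 := ih (by omega)
        have h2 := H3 (r - 1 - (i + 1)) (by omega)
        have e : r - 1 - (i + 1) + 1 = r - 1 - i := by omega
        rw [e, h1] at h2
        simpa [hb] using h2
    have U : ∀ i, i ≤ r → extZ r v (i + r) * b ^ i = extZ r v r * (-a) ^ i := by
      intro i
      induction i with
      | zero => intro _; simp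
      | succ i ih =>
        intro hi
        have h1 := ih (by omega)
        have h2 := H1 i (by omega)
        have e : i + 1 + r = i + r + 1 := by omega
        rw [e, pow_succ, pow_succ]
        linear_combination b ^ i * h2 - a * h1
    refine ⟨extZ r v r / b ^ r, ?_⟩
    funext j
    have hj := j.2
    rw [← extZ_val r v j]
    simp only [Pi.smul_apply, kerGen, smul_eq_mul]
    split_ifs with h
    · have := L (r - 1 - j) (by omega)
      have e : r - 1 - (r - 1 - (j : ℕ)) = j := by omega
      rw [e] at this
      rw [this]; simp
    · have h1 := U (j - r) (by omega)
      rw [Nat.sub_add_cancel (by omega)] at h1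
      have e : b ^ r = b ^ ((j : ℕ) - r) * b ^ (2 * r - (j : ℕ)) := by
        rw [← pow_add]; congr 1; omega
      have hbr : b ^ r ≠ 0 := pow_ne_zero _ hb
      rw [div_mul_eq_mul_div, div_eq_iff hbr, e]
      linear_combination -(b ^ (2 * r - (j : ℕ))) * h1

/-- For `(a,b) ≠ (0,0)` the kernel of `a𝒜 + bℬ` is spanned by the
nonzero vector `w(a,b)`; in particular `a𝒜 + bℬ` has rank `2r`. -/
theorem corankOne_kernel_description
    (r : ℕ) (hr : 1 ≤ r) (a b : ℂ) (hab : ¬(a = 0 ∧ b = 0)) :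
    kerGen r a b ≠ 0 ∧
    LinearMap.ker (a • corankOneA r + b • corankOneB r).mulVecLin =
      Submodule.span ℂ {kerGen r a b} ∧
    (a • corankOneA r + b • corankOneB r).rank = 2 * r := by
  have hne := kerGen_ne r a b hab
  have hk : LinearMap.ker (a • corankOneA r + b • corankOneB r).mulVecLin =
      Submodule.span ℂ {kerGen r a b} := by
    ext v
    rw [LinearMap.mem_ker, Matrix.mulVecLin_apply, Submodule.mem_span_singleton]
    constructor
    · exact ker_sub_s5 r hr a b hab v
    · rintro ⟨c, rfl⟩
      rw [Matrix.mulVec_smul, kerGen_mem, smul_zero]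
  refine ⟨hne, hk, ?_⟩
  have h := LinearMap.finrank_range_add_finrank_ker
    (a • corankOneA r + b • corankOneB r).mulVecLin
  rw [hk, finrank_span_singleton hne] at h
  simp only [Module.finrank_fin_fun] at h
  unfold Matrix.rank
  omega
end

section
/- Let h ≥ 1 and 1 ≤ r₁ ≤ r₂ ≤ … ≤ r_h be integers and let 𝒜, ℬ be the canonical matrices associated to the partition (r₁,…,r_h). For every (a,b) ∈ ℂ² with (a,b) ≠ (0,0) and every vector v ∈ ℂ^{N+1} (coordinates indexed by pairs (i,p), 1 ≤ i ≤ h, 0 ≤ p ≤ 2rᵢ) lying in the kernel of a•𝒜 + b•ℬ, one has v_{(i,p)} = 0 for every i and every 0 ≤ p ≤ rᵢ − 1. (That is, the vertices of all quadrics of the pencil are contained in a common fixed linear subspace of dimension N − r.) -/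
open Matrix

theorem canA_row (h : ℕ) (rr : Fin h → ℕ) (v : PencilIdx h rr → ℂ) (i : Fin h) (k : ℕ)
    (hk : rr i + k < 2 * rr i + 1) :
    (canA h rr).mulVec v ⟨i, ⟨rr i + k, hk⟩⟩ =
      if hk' : k < rr i then v ⟨i, ⟨k, by omega⟩⟩ else 0 := by
  simp only [Matrix.mulVec, dotProduct, canA, Matrix.of_apply]
  split_ifs with hk'
  · rw [Finset.sum_eq_single (⟨i, ⟨k, by omega⟩⟩ : PencilIdx h rr)]
    · rw [if_pos ⟨rfl, Or.inr ⟨by simp only []; omega, hk'⟩⟩, one_mul]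
    · rintro ⟨j, q⟩ - hne
      rw [if_neg, zero_mul]
      rintro ⟨h1, h2⟩
      dsimp only at h1 h2
      subst h1
      apply hne
      congr 1
      ext
      dsimp only
      omega
    · intro hn
      exact absurd (Finset.mem_univ _) hn
  · apply Finset.sum_eq_zero
    rintro ⟨j, q⟩ -
    rw [if_neg, zero_mul]
    rintro ⟨h1, h2⟩
    dsimp only at h1 h2
    omega

theorem canB_row (h : ℕ) (rr : Fin h → ℕ) (v : PencilIdx h rr → ℂ) (i : Fin h) (k : ℕ)
    (hk' : k < rr i) :
    (canB h rr).mulVec v ⟨i, ⟨rr i + (k + 1), by omega⟩⟩ = v ⟨i, ⟨k, by omega⟩⟩ := by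
  simp only [Matrix.mulVec, dotProduct, canB, Matrix.of_apply]
  rw [Finset.sum_eq_single (⟨i, ⟨k, by omega⟩⟩ : PencilIdx h rr)]
  · rw [if_pos ⟨rfl, Or.inr ⟨by simp only []; omega, hk'⟩⟩, one_mul]
  · rintro ⟨j, q⟩ - hne
    rw [if_neg, zero_mul]
    rintro ⟨h1, h2⟩
    dsimp only at h1 h2
    subst h1
    apply hne
    congr 1
    ext
    dsimp only
    omega
  · intro hn
    exact absurd (Finset.mem_univ _) hn

theorem canB_row_zero (h : ℕ) (rr : Fin h → ℕ) (v : PencilIdx h rr → ℂ) (i : Fin h) :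
    (canB h rr).mulVec v ⟨i, ⟨rr i + 0, by omega⟩⟩ = 0 := by
  simp only [Matrix.mulVec, dotProduct, canB, Matrix.of_apply]
  apply Finset.sum_eq_zero
  rintro ⟨j, q⟩ -
  rw [if_neg, zero_mul]
  rintro ⟨h1, h2⟩
  dsimp only at h1 h2
  omega

/-- Every kernel vector of every member `a𝒜 + bℬ`, `(a,b) ≠ (0,0)`,
of the canonical pencil vanishes in all coordinates `(i, p)` with `p < rᵢ`; i.e. the
vertices of all quadrics of the pencil lie in a common linear subspace of dimension
`N − r`. -/
theorem canonical_pencil_kernels_in_common_subspace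
    (h : ℕ) (hh : 1 ≤ h) (rr : Fin h → ℕ) (hmono : Monotone rr) (hpos : ∀ i, 1 ≤ rr i)
    (a b : ℂ) (hab : ¬(a = 0 ∧ b = 0))
    (v : PencilIdx h rr → ℂ)
    (hv : (a • canA h rr + b • canB h rr).mulVec v = 0) :
    ∀ u : PencilIdx h rr, (u.2 : ℕ) < rr u.1 → v u = 0 := by
  rintro ⟨i, ⟨p, hp⟩⟩ hpr
  dsimp only at hpr
  have hrow : ∀ u, a * (canA h rr).mulVec v u + b * (canB h rr).mulVec v u = 0 := by
    intro u
    have := congrFun hv u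
    simpa [Matrix.add_mulVec, Matrix.smul_mulVec] using this
  by_cases ha : a = 0
  · have hb : b ≠ 0 := fun hb => hab ⟨ha, hb⟩
    have := hrow ⟨i, ⟨rr i + (p + 1), by omega⟩⟩
    rw [canB_row h rr v i p hpr, ha, zero_mul, zero_add] at this
    exact (mul_eq_zero.mp this).resolve_left hb
  · induction p with
    | zero =>
      have := hrow ⟨i, ⟨rr i + 0, by omega⟩⟩
      rw [canB_row_zero, canA_row, dif_pos hpr, mul_zero, add_zero] at this
      exact (mul_eq_zero.mp this).resolve_left ha
    | succ k ih =>
      have := hrow ⟨i, ⟨rr i + (k + 1), by omega⟩⟩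
      rw [canB_row h rr v i k (by omega), canA_row, dif_pos hpr,
        ih (by omega) (by omega), mul_zero, add_zero] at this
      exact (mul_eq_zero.mp this).resolve_left ha
end

section
/- Let h ≥ 1 and 1 ≤ r₁ ≤ r₂ ≤ … ≤ r_h be integers, r = r₁ + … + r_h, N = 2r + h − 1, and let 𝒜, ℬ be the canonical matrices associated to (r₁,…,r_h), with rows and columns indexed by pairs (i,p). Let Ã, B̃ be the compression-form matrices of size N+1 associated to (r₁,…,r_h). Then there exists a bijection σ from the index set {(i,p) : 1 ≤ i ≤ h, 0 ≤ p ≤ 2rᵢ} to {0,1,…,N} such that 𝒜_{u,v} = Ã_{σ(u),σ(v)} and ℬ_{u,v} = B̃_{σ(u),σ(v)} for all indices u, v. In particular the canonical pencil is congruent, via a permutation matrix, to a pencil of matrices having a zero block of size (N+1−r)×(N+1−r), i.e. it is a compression space. -/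
open Matrix

/-- `d i = r₁ + … + r_{i−1}` (sum of the parts preceding part `i`). -/
def dOf (h : ℕ) (rr : Fin h → ℕ) (i : Fin h) : ℕ :=
  ∑ j ∈ Finset.univ.filter (fun j => j < i), rr j

/-- The compression-form matrix `Ã` of size `2r + h = N + 1`: entry `1` exactly in
positions `(dᵢ + p, r + (dᵢ + i) + p)` and symmetrically, for `0 ≤ p ≤ rᵢ − 1`. -/
def comprA (h r : ℕ) (rr : Fin h → ℕ) : Matrix (Fin (2 * r + h)) (Fin (2 * r + h)) ℂ :=
  Matrix.of fun x y =>
    if ∃ i : Fin h, ∃ p : Fin (rr i),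
        (((x : ℕ) = dOf h rr i + p ∧ (y : ℕ) = r + (dOf h rr i + i) + p) ∨
         ((y : ℕ) = dOf h rr i + p ∧ (x : ℕ) = r + (dOf h rr i + i) + p))
    then 1 else 0

/-- The compression-form matrix `B̃` of size `2r + h = N + 1`: entry `1` exactly in
positions `(dᵢ + p, r + (dᵢ + i) + p + 1)` and symmetrically, for `0 ≤ p ≤ rᵢ − 1`. -/
def comprB (h r : ℕ) (rr : Fin h → ℕ) : Matrix (Fin (2 * r + h)) (Fin (2 * r + h)) ℂ :=
  Matrix.of fun x y =>
    if ∃ i : Fin h, ∃ p : Fin (rr i),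
        (((x : ℕ) = dOf h rr i + p ∧ (y : ℕ) = r + (dOf h rr i + i) + p + 1) ∨
         ((y : ℕ) = dOf h rr i + p ∧ (x : ℕ) = r + (dOf h rr i + i) + p + 1))
    then 1 else 0

lemma dOf_lt (h : ℕ) (rr : Fin h → ℕ) (i j : Fin h) (hij : i < j) :
    dOf h rr i + rr i ≤ dOf h rr j := by
  unfold dOf
  rw [add_comm, ← Finset.sum_insert (by simp)]
  apply Finset.sum_le_sum_of_subset
  intro x hx
  simp at hx ⊢
  rcases hx with rfl | hx
  · exact hij
  · exact hx.trans hij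

lemma dOf_le (h : ℕ) (rr : Fin h → ℕ) (i : Fin h) :
    dOf h rr i + rr i ≤ ∑ i, rr i := by
  unfold dOf
  rw [add_comm, ← Finset.sum_insert (by simp)]
  apply Finset.sum_le_sum_of_subset
  intro x hx
  simp

/-- The index map. -/
def sig (h : ℕ) (rr : Fin h → ℕ) (r : ℕ) (u : PencilIdx h rr) : ℕ :=
  if (u.2 : ℕ) < rr u.1 then dOf h rr u.1 + u.2
  else r + (dOf h rr u.1 + u.1) + (u.2 - rr u.1)

lemma sig_lo (h : ℕ) (rr : Fin h → ℕ) (r : ℕ) (hsum : ∑ i, rr i = r) (u : PencilIdx h rr)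
    (k : Fin h) (p : ℕ) (hp : p < rr k) :
    sig h rr r u = dOf h rr k + p ↔ u.1 = k ∧ (u.2 : ℕ) = p := by
  obtain ⟨i, a, ha⟩ := u
  have h1 := dOf_le h rr i
  have h2 := dOf_le h rr k
  rw [hsum] at h1 h2
  simp only [sig]
  rcases lt_trichotomy i k with hl | hl | hl
  · have := dOf_lt h rr i k hl
    have h3 := hl.ne
    simp only [h3, false_and, iff_false]
    split_ifs <;> omega
  · subst hl
    simp only [true_and]
    split_ifs <;> omega
  · have := dOf_lt h rr k i hl
    have h3 := hl.ne'
    simp only [h3, false_and, iff_false]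
    split_ifs <;> omega

lemma sig_hi (h : ℕ) (rr : Fin h → ℕ) (r : ℕ) (hsum : ∑ i, rr i = r) (u : PencilIdx h rr)
    (k : Fin h) (p : ℕ) (hp : p ≤ rr k) :
    sig h rr r u = r + (dOf h rr k + k) + p ↔ u.1 = k ∧ (u.2 : ℕ) = p + rr k := by
  obtain ⟨i, a, ha⟩ := u
  have h1 := dOf_le h rr i
  have h2 := dOf_le h rr k
  rw [hsum] at h1 h2
  simp only [sig]
  rcases lt_trichotomy i k with hl | hl | hl
  · have := dOf_lt h rr i k hl
    have h3 := hl.ne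
    simp only [h3, false_and, iff_false]
    split_ifs <;> omega
  · subst hl
    simp only [true_and]
    split_ifs <;> omega
  · have := dOf_lt h rr k i hl
    have h3 := hl.ne'
    simp only [h3, false_and, iff_false]
    split_ifs <;> omega

lemma sig_inj (h : ℕ) (rr : Fin h → ℕ) (r : ℕ) (hsum : ∑ i, rr i = r) (u v : PencilIdx h rr)
    (huv : sig h rr r u = sig h rr r v) : u = v := by
  have key : u.1 = v.1 ∧ (u.2 : ℕ) = v.2 := by
    by_cases hv : (v.2 : ℕ) < rr v.1
    · rw [← sig_lo h rr r hsum u v.1 _ hv, huv, sig, if_pos hv]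
    · have := (sig_hi h rr r hsum u v.1 (v.2 - rr v.1) (by have := v.2.2; omega)).1
        (by rw [huv, sig, if_neg hv])
      exact ⟨this.1, by omega⟩
  obtain ⟨i, a⟩ := u
  obtain ⟨j, b⟩ := v
  obtain ⟨rfl, h2⟩ := key
  have h3 : a = b := Fin.ext h2
  subst h3
  rfl

lemma sig_bound (h : ℕ) (rr : Fin h → ℕ) (r : ℕ) (hsum : ∑ i, rr i = r) (u : PencilIdx h rr) :
    sig h rr r u < 2 * r + h := by
  obtain ⟨i, a, ha⟩ := u
  have h1 := dOf_le h rr i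
  rw [hsum] at h1
  have := i.2
  simp only [sig]
  split_ifs <;> omega

/-- The canonical pencil is carried, by a permutation of the indices,
to the compression-form pencil; in particular the latter has a zero block of size
`(N + 1 − r) × (N + 1 − r)` (rows and columns with index `≥ r`), so the canonical
pencil is a compression space. -/
theorem canonical_pencil_is_compression_space
    (h : ℕ) (hh : 1 ≤ h) (rr : Fin h → ℕ) (hmono : Monotone rr) (hpos : ∀ i, 1 ≤ rr i)
    (r : ℕ) (hsum : ∑ i, rr i = r) :
    (∃ σ : PencilIdx h rr ≃ Fin (2 * r + h),
      ∀ u v : PencilIdx h rr,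
        canA h rr u v = comprA h r rr (σ u) (σ v) ∧
        canB h rr u v = comprB h r rr (σ u) (σ v)) ∧
    (∀ x y : Fin (2 * r + h), r ≤ (x : ℕ) → r ≤ (y : ℕ) →
      comprA h r rr x y = 0 ∧ comprB h r rr x y = 0) := by
  refine ⟨?_, ?_⟩
  · let f : PencilIdx h rr → Fin (2 * r + h) := fun u => ⟨sig h rr r u, sig_bound h rr r hsum u⟩
    have hf : Function.Bijective f := by
      rw [Fintype.bijective_iff_injective_and_card]
      refine ⟨fun u v huv => sig_inj h rr r hsum u v (Fin.ext_iff.1 huv), ?_⟩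
      simp [Finset.sum_add_distrib, ← Finset.mul_sum, hsum]
    refine ⟨Equiv.ofBijective f hf, fun u v => ⟨?_, ?_⟩⟩
    · simp only [canA, comprA, Matrix.of_apply, Equiv.ofBijective_apply, f]
      congr 1
      apply propext
      constructor
      · rintro ⟨h1, ⟨h2, h3⟩ | ⟨h2, h3⟩⟩
        · refine ⟨u.1, ⟨u.2, h3⟩, Or.inl ⟨?_, ?_⟩⟩
          · exact (sig_lo h rr r hsum u _ _ h3).2 ⟨rfl, rfl⟩
          · exact (sig_hi h rr r hsum v _ _ h3.le).2 ⟨h1.symm, h2⟩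
        · refine ⟨u.1, ⟨v.2, h3⟩, Or.inr ⟨?_, ?_⟩⟩
          · exact (sig_lo h rr r hsum v _ _ h3).2 ⟨h1.symm, rfl⟩
          · exact (sig_hi h rr r hsum u _ _ h3.le).2 ⟨rfl, h2⟩
      · rintro ⟨k, ⟨p, hp⟩, ⟨h1, h2⟩ | ⟨h1, h2⟩⟩
        · obtain ⟨rfl, h3⟩ := (sig_lo h rr r hsum u _ _ hp).1 h1
          obtain ⟨h4, h5⟩ := (sig_hi h rr r hsum v _ _ hp.le).1 h2
          exact ⟨h4.symm, Or.inl ⟨by omega, by omega⟩⟩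
        · obtain ⟨h3, h4⟩ := (sig_lo h rr r hsum v _ _ hp).1 h1
          obtain ⟨rfl, h5⟩ := (sig_hi h rr r hsum u _ _ hp.le).1 h2
          exact ⟨h3.symm, Or.inr ⟨by omega, by omega⟩⟩
    · simp only [canB, comprB, Matrix.of_apply, Equiv.ofBijective_apply, f]
      congr 1
      apply propext
      constructor
      · rintro ⟨h1, ⟨h2, h3⟩ | ⟨h2, h3⟩⟩
        · refine ⟨u.1, ⟨u.2, h3⟩, Or.inl ⟨?_, ?_⟩⟩
          · exact (sig_lo h rr r hsum u _ _ h3).2 ⟨rfl, rfl⟩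
          · exact (sig_hi h rr r hsum v _ (u.2 + 1) h3).2 ⟨h1.symm, by omega⟩
        · refine ⟨u.1, ⟨v.2, h3⟩, Or.inr ⟨?_, ?_⟩⟩
          · exact (sig_lo h rr r hsum v _ _ h3).2 ⟨h1.symm, rfl⟩
          · exact (sig_hi h rr r hsum u _ (v.2 + 1) h3).2 ⟨rfl, by omega⟩
      · rintro ⟨k, ⟨p, hp⟩, ⟨h1, h2⟩ | ⟨h1, h2⟩⟩
        · obtain ⟨rfl, h3⟩ := (sig_lo h rr r hsum u _ _ hp).1 h1
          obtain ⟨h4, h5⟩ := (sig_hi h rr r hsum v _ (p + 1) hp).1 h2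
          exact ⟨h4.symm, Or.inl ⟨by omega, by omega⟩⟩
        · obtain ⟨h3, h4⟩ := (sig_lo h rr r hsum v _ _ hp).1 h1
          obtain ⟨rfl, h5⟩ := (sig_hi h rr r hsum u _ (p + 1) hp).1 h2
          exact ⟨h3.symm, Or.inr ⟨by omega, by omega⟩⟩
  · intro x y hx hy
    simp only [comprA, comprB, Matrix.of_apply]
    constructor
    all_goals
      rw [if_neg]
      rintro ⟨k, ⟨p, hp⟩, ⟨h1, h2⟩ | ⟨h1, h2⟩⟩ <;>
      · have := dOf_le h rr k
        simp only at h1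
        omega
end

section
/- Let r ≥ 1 be an integer and let 𝒜, ℬ be the corank-one canonical matrices of size 2r+1. Then the ℂ-vector space 𝔤(𝒜,ℬ) of complex (2r+1)×(2r+1) matrices X such that both Xᵀ𝒜 + 𝒜X and Xᵀℬ + ℬX lie in the ℂ-linear span of {𝒜, ℬ} has dimension 5 over ℂ. -/
open Matrix

/-- The ℂ-linear map `X ↦ XᵀM + MX`. -/
noncomputable def congrDeriv {n : Type*} [Fintype n] (M : Matrix n n ℂ) :
    Matrix n n ℂ →ₗ[ℂ] Matrix n n ℂ where
  toFun X := Xᵀ * M + M * X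
  map_add' X Y := by
    simp only [Matrix.transpose_add, Matrix.add_mul, Matrix.mul_add]
    abel
  map_smul' c X := by
    simp only [Matrix.transpose_smul, Matrix.smul_mul, Matrix.mul_smul, smul_add,
      RingHom.id_apply]

/-- The Lie algebra `𝔤(A,B)` of the stabilizer of the pencil spanned by `A` and `B`,
as a ℂ-subspace of the space of matrices: all `X` such that `XᵀA + AX` and
`XᵀB + BX` lie in the span of `{A, B}`. -/
noncomputable def stabAlg {n : Type*} [Fintype n] (A B : Matrix n n ℂ) :
    Submodule ℂ (Matrix n n ℂ) :=
  Submodule.comap (congrDeriv A) (Submodule.span ℂ {A, B}) ⊓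
  Submodule.comap (congrDeriv B) (Submodule.span ℂ {A, B})



theorem cA_mul_lt (r : ℕ) (X : Matrix (Fin (2 * r + 1)) (Fin (2 * r + 1)) ℂ)
    (x : ℕ → ℕ → ℂ) (hx : ∀ p q, X p q = x p q) (p q : Fin (2 * r + 1)) :
    (corankOneA r * X) p q =
      if (p : ℕ) < r then x (p + r) q else if (p : ℕ) < 2 * r then x (p - r) q else 0 := by
  rw [Matrix.mul_apply]
  simp only [corankOneA, Matrix.of_apply, ite_mul, one_mul, zero_mul, hx]
  split_ifs with h1 h2
  · rw [Finset.sum_eq_single (⟨p + r, by omega⟩ : Fin (2 * r + 1))]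
    · simp [h1]
    · intro b _ hb
      have : (b : ℕ) ≠ p + r := fun h => hb (Fin.ext h)
      rw [if_neg (by omega)]
    · simp
  · rw [Finset.sum_eq_single (⟨p - r, by omega⟩ : Fin (2 * r + 1))]
    · rw [if_pos (by simp only; omega)]
    · intro b _ hb
      have : (b : ℕ) ≠ p - r := fun h => hb (Fin.ext h)
      rw [if_neg (by omega)]
    · simp
  · apply Finset.sum_eq_zero
    intro b _
    rw [if_neg (by omega)]

theorem cB_mul_lt (r : ℕ) (X : Matrix (Fin (2 * r + 1)) (Fin (2 * r + 1)) ℂ)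
    (x : ℕ → ℕ → ℂ) (hx : ∀ p q, X p q = x p q) (p q : Fin (2 * r + 1)) :
    (corankOneB r * X) p q =
      if (p : ℕ) < r then x (p + r + 1) q else if r < (p : ℕ) then x (p - r - 1) q else 0 := by
  rw [Matrix.mul_apply]
  simp only [corankOneB, Matrix.of_apply, ite_mul, one_mul, zero_mul, hx]
  split_ifs with h1 h2
  · rw [Finset.sum_eq_single (⟨p + r + 1, by omega⟩ : Fin (2 * r + 1))]
    · simp [h1]
    · intro b _ hb
      have : (b : ℕ) ≠ p + r + 1 := fun h => hb (Fin.ext h)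
      rw [if_neg (by omega)]
    · simp
  · rw [Finset.sum_eq_single (⟨p - r - 1, by omega⟩ : Fin (2 * r + 1))]
    · rw [if_pos (by simp only; omega)]
    · intro b _ hb
      have : (b : ℕ) ≠ p - r - 1 := fun h => hb (Fin.ext h)
      rw [if_neg (by omega)]
    · simp
  · apply Finset.sum_eq_zero
    intro b _
    rw [if_neg (by omega)]

theorem cA_symm (r : ℕ) : (corankOneA r)ᵀ = corankOneA r := by
  ext p q
  simp only [corankOneA, Matrix.transpose_apply, Matrix.of_apply]
  congr 1
  exact propext or_comm

theorem cB_symm (r : ℕ) : (corankOneB r)ᵀ = corankOneB r := by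
  ext p q
  simp only [corankOneB, Matrix.transpose_apply, Matrix.of_apply]
  congr 1
  exact propext or_comm

theorem cD_apply {n : Type*} [Fintype n] (M X : Matrix n n ℂ) (h : Mᵀ = M) (p q : n) :
    congrDeriv M X p q = (M * X) q p + (M * X) p q := by
  have : Xᵀ * M = (M * X)ᵀ := by rw [Matrix.transpose_mul, h]
  change (Xᵀ * M + M * X) p q = _
  rw [this]; rfl

/-- Entries as functions of natural numbers. -/
noncomputable def cExt (r : ℕ) (X : Matrix (Fin (2 * r + 1)) (Fin (2 * r + 1)) ℂ) (p q : ℕ) : ℂ :=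
  if h : p < 2 * r + 1 ∧ q < 2 * r + 1 then X ⟨p, h.1⟩ ⟨q, h.2⟩ else 0

theorem cExt_spec (r : ℕ) (X : Matrix (Fin (2 * r + 1)) (Fin (2 * r + 1)) ℂ) (p q) :
    X p q = cExt r X p q := by
  rw [cExt, dif_pos ⟨p.2, q.2⟩]

/-- The explicit solution. -/
noncomputable def cSol (r : ℕ) (a b c d s : ℂ) (p q : ℕ) : ℂ :=
  if p < r then
    if q < r then
      if p = q then a - s - p * (d - a)
      else if p = q + 1 then - ((r : ℂ) - p) * b
      else if q = p + 1 then - (q : ℂ) * c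
      else 0
    else 0
  else if q < r then 0
  else
    if p = q then s + ((p : ℂ) - r) * (d - a)
    else if q = p + 1 then (2 * r - (p : ℂ)) * b
    else if p = q + 1 then ((p : ℂ) - r) * c
    else 0

theorem cSol_P (r : ℕ) (a b c d s : ℂ) (p q : ℕ) (hp : p < r) (hq : q < r) :
    cSol r a b c d s p q = if p = q then a - s - p * (d - a)
      else if p = q + 1 then - ((r : ℂ) - p) * b
      else if q = p + 1 then - (q : ℂ) * c
      else 0 := by
  rw [cSol, if_pos hp, if_pos hq]

theorem cSol_Q (r : ℕ) (a b c d s : ℂ) (p q : ℕ) (hp : p < r) (hq : r ≤ q) :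
    cSol r a b c d s p q = 0 := by
  rw [cSol, if_pos hp, if_neg (by omega)]

theorem cSol_R (r : ℕ) (a b c d s : ℂ) (p q : ℕ) (hp : r ≤ p) (hq : q < r) :
    cSol r a b c d s p q = 0 := by
  rw [cSol, if_neg (by omega), if_pos hq]

theorem cSol_S (r : ℕ) (a b c d s : ℂ) (p q : ℕ) :
    cSol r a b c d s (r + p) (r + q) = if p = q then s + p * (d - a)
      else if q = p + 1 then ((r : ℂ) - p) * b
      else if p = q + 1 then (p : ℂ) * c
      else 0 := by
  rw [cSol, if_neg (by omega), if_neg (by omega)]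
  simp only [Nat.add_left_cancel_iff, add_assoc]
  push_cast
  congr 1
  · ring
  · congr 1
    · ring
    · congr 1
      ring

theorem cPair_A (r : ℕ) (a b c d s : ℂ) (p q : ℕ) (hp : p < r) (hq : q ≤ r) :
    (if q < r then cSol r a b c d s q p else 0) + cSol r a b c d s (r + p) (r + q) =
    (if q = p then a else 0) + (if q = p + 1 then b else 0) := by
  rw [cSol_S]
  rcases Nat.lt_or_ge q r with h | h
  · rw [if_pos h, cSol_P _ _ _ _ _ _ _ _ h hp]
    rcases (by omega : q = p ∨ q = p + 1 ∨ p = q + 1 ∨ q > p + 1 ∨ p > q + 1) with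
      rfl | rfl | rfl | h | h <;>
    simp (disch := omega) only [if_neg, if_pos] <;> push_cast <;> ring
  · obtain rfl : q = r := by omega
    rw [if_neg (by omega), if_neg (by omega), if_neg (by omega : ¬ (p = q + 1)),
      if_neg (by omega : ¬ (q = p))]
    by_cases h : q = p + 1
    · subst h; simp
    · simp [h]

theorem cPair_B (r : ℕ) (a b c d s : ℂ) (p q : ℕ) (hp : p < r) (hq : q ≤ r) :
    (if 0 < q then cSol r a b c d s (q - 1) p else 0) + cSol r a b c d s (r + (p + 1)) (r + q) =
    (if q = p then c else 0) + (if q = p + 1 then d else 0) := by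
  rw [cSol_S]
  rcases q with _ | q
  · by_cases h : p = 0
    · subst h; simp
    · have h' : ¬ (0 = p) := by omega
      simp [h, h']
  · rw [if_pos (by omega), Nat.add_sub_cancel, cSol_P _ _ _ _ _ _ _ _ (by omega) hp]
    rcases (by omega : q = p ∨ q = p + 1 ∨ p = q + 1 ∨ q > p + 1 ∨ p > q + 1) with
      rfl | rfl | rfl | h | h <;>
    simp (disch := omega) only [if_neg, if_pos] <;> push_cast <;> ring

theorem cSol_A (r : ℕ) (a b c d s : ℂ) :
    congrDeriv (corankOneA r) (Matrix.of fun p q => cSol r a b c d s p q) =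
      a • corankOneA r + b • corankOneB r := by
  ext p q
  rw [cD_apply _ _ (cA_symm r),
    cA_mul_lt r (Matrix.of fun p q => cSol r a b c d s p q) (cSol r a b c d s) (fun _ _ => rfl),
    cA_mul_lt r (Matrix.of fun p q => cSol r a b c d s p q) (cSol r a b c d s) (fun _ _ => rfl)]
  obtain ⟨p, hp⟩ := p
  obtain ⟨q, hq⟩ := q
  simp only [Matrix.add_apply, Matrix.smul_apply, corankOneA, corankOneB, Matrix.of_apply,
    smul_eq_mul]
  have key := cPair_A r a b c d s
  rcases lt_or_ge p r with h1 | h1 <;> rcases lt_or_ge q r with h2 | h2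
  · simp (disch := omega) only [cSol_R, if_pos, if_neg]; simp
  · obtain ⟨q, rfl⟩ := Nat.exists_eq_add_of_le h2
    have key := key p q h1 (by omega)
    clear * - key h1 h2 hp hq
    grind
  · obtain ⟨p, rfl⟩ := Nat.exists_eq_add_of_le h1
    have key := key q p h2 (by omega)
    clear * - key h1 h2 hp hq
    grind
  · rw [if_neg h2.not_gt, if_neg h1.not_gt]
    have e : ∀ u v : ℕ, u < 2 * r + 1 → r ≤ v → (if u < 2 * r then cSol r a b c d s (u - r) v else 0) = 0 := by
      intro u v hu hv
      split_ifs
      · exact cSol_Q _ _ _ _ _ _ _ _ (by omega) hv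
      · rfl
    rw [e q p hq h1, e p q hp h2]
    simp (disch := omega) only [if_neg]
    simp

theorem cSol_B (r : ℕ) (a b c d s : ℂ) :
    congrDeriv (corankOneB r) (Matrix.of fun p q => cSol r a b c d s p q) =
      c • corankOneA r + d • corankOneB r := by
  ext p q
  rw [cD_apply _ _ (cB_symm r),
    cB_mul_lt r (Matrix.of fun p q => cSol r a b c d s p q) (cSol r a b c d s) (fun _ _ => rfl),
    cB_mul_lt r (Matrix.of fun p q => cSol r a b c d s p q) (cSol r a b c d s) (fun _ _ => rfl)]
  obtain ⟨p, hp⟩ := p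
  obtain ⟨q, hq⟩ := q
  simp only [Matrix.add_apply, Matrix.smul_apply, corankOneA, corankOneB, Matrix.of_apply,
    smul_eq_mul]
  have key := cPair_B r a b c d s
  rcases lt_or_ge p r with h1 | h1 <;> rcases lt_or_ge q r with h2 | h2
  · simp (disch := omega) only [cSol_R, if_pos, if_neg]; simp
  · obtain ⟨q, rfl⟩ := Nat.exists_eq_add_of_le h2
    have key := key p q h1 (by omega)
    clear * - key h1 h2 hp hq
    grind
  · obtain ⟨p, rfl⟩ := Nat.exists_eq_add_of_le h1
    have key := key q p h2 (by omega)
    clear * - key h1 h2 hp hq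
    grind
  · rw [if_neg h2.not_gt, if_neg h1.not_gt]
    have e : ∀ u v : ℕ, u < 2 * r + 1 → r ≤ v → (if r < u then cSol r a b c d s (u - r - 1) v else 0) = 0 := by
      intro u v hu hv
      split_ifs
      · exact cSol_Q _ _ _ _ _ _ _ _ (by omega) hv
      · rfl
    rw [e q p hq h1, e p q hp h2]
    simp (disch := omega) only [if_neg]
    simp

theorem cKer (r : ℕ) (hr : 1 ≤ r) (X : Matrix (Fin (2 * r + 1)) (Fin (2 * r + 1)) ℂ)
    (hA : congrDeriv (corankOneA r) X = 0) (hB : congrDeriv (corankOneB r) X = 0)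
    (h0 : X ⟨r, by omega⟩ ⟨r, by omega⟩ = 0) : X = 0 := by
  set x := cExt r X with hxdef
  have hx : ∀ p q, X p q = x p q := cExt_spec r X
  have eA : ∀ p q : ℕ, p < 2 * r + 1 → q < 2 * r + 1 →
      (if q < r then x (q + r) p else if q < 2 * r then x (q - r) p else 0) +
      (if p < r then x (p + r) q else if p < 2 * r then x (p - r) q else 0) = 0 := by
    intro p q hp hq
    have := congrFun (congrFun hA ⟨p, hp⟩) ⟨q, hq⟩
    rw [cD_apply _ _ (cA_symm r), cA_mul_lt r _ _ hx, cA_mul_lt r _ _ hx] at this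
    exact this
  have eB : ∀ p q : ℕ, p < 2 * r + 1 → q < 2 * r + 1 →
      (if q < r then x (q + r + 1) p else if r < q then x (q - r - 1) p else 0) +
      (if p < r then x (p + r + 1) q else if r < p then x (p - r - 1) q else 0) = 0 := by
    intro p q hp hq
    have := congrFun (congrFun hB ⟨p, hp⟩) ⟨q, hq⟩
    rw [cD_apply _ _ (cB_symm r), cB_mul_lt r _ _ hx, cB_mul_lt r _ _ hx] at this
    exact this
  have h00 : x r r = 0 := by rw [← h0, hx]
  clear_value x
  clear hA hB h0 hxdef
  -- block R
  have R1 : ∀ i j, i < r → j < r → x (r + j) i + x (r + i) j = 0 := by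
    intro i j hi hj
    have := eA i j (by omega) (by omega)
    rwa [if_pos hj, if_pos hi, add_comm j, add_comm i] at this
  have R2 : ∀ i j, i < r → j < r → x (r + (j + 1)) i + x (r + (i + 1)) j = 0 := by
    intro i j hi hj
    have := eB i j (by omega) (by omega)
    rwa [if_pos hj, if_pos hi, add_comm j, add_comm i, add_assoc, add_assoc] at this
  have RH : ∀ i j, i < r → j + 1 < r → x (r + (i + 1)) j = x (r + i) (j + 1) := by
    intro i j hi hj
    have h1 := R2 i j hi (by omega)
    have h2 := R1 i (j + 1) hi hj
    linear_combination h1 - h2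
  have RH' : ∀ k i j, i + k ≤ r → j + k < r → x (r + (i + k)) j = x (r + i) (j + k) := by
    intro k
    induction k with
    | zero => intros; rfl
    | succ k ih =>
      intro i j hi hj
      rw [← add_assoc i, RH (i + k) j (by omega) (by omega), ih i (j + 1) (by omega) (by omega)]
      congr 1; omega
  have R0 : ∀ i j, i ≤ r → j < r → x (r + i) j = 0 := by
    intro i j hi hj
    rcases lt_or_ge i r with h | h
    · have e := R1 i j h hj
      have : x (r + j) i = x (r + i) j := by
        rcases le_total i j with h' | h'
        · obtain ⟨k, rfl⟩ := Nat.exists_eq_add_of_le h'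
          exact RH' k i i (by omega) (by omega)
        · obtain ⟨k, rfl⟩ := Nat.exists_eq_add_of_le h'
          exact (RH' k j j (by omega) (by omega)).symm
      rw [this] at e
      exact add_self_eq_zero.mp e
    · obtain ⟨n, rfl⟩ : ∃ n, r = n + 1 := ⟨r - 1, by omega⟩
      obtain rfl : i = n + 1 := by omega
      have e := R2 n j (by omega) hj
      have : x (n + 1 + (j + 1)) n = x (n + 1 + (n + 1)) j := by
        obtain ⟨k, rfl⟩ := Nat.exists_eq_add_of_le (show j ≤ n by omega)
        have := RH' k (j + 1) j (by omega) (by omega)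
        rw [← this]; congr 1; omega
      rw [this] at e
      exact add_self_eq_zero.mp e
  -- block Q
  have Q1 : ∀ i j, i < r → j < r → x j (r + i) + x i (r + j) = 0 := by
    intro i j hi hj
    have := eA (r + i) (r + j) (by omega) (by omega)
    rwa [if_neg (by omega), if_pos (by omega), if_neg (by omega), if_pos (by omega),
      Nat.add_sub_cancel_left, Nat.add_sub_cancel_left] at this
  have Q1' : ∀ i, i < r → x i (r + r) = 0 := by
    intro i hi
    have := eA (r + i) (r + r) (by omega) (by omega)
    rwa [if_neg (by omega), if_neg (by omega), if_neg (by omega), if_pos (by omega),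
      Nat.add_sub_cancel_left, zero_add] at this
  have Q2 : ∀ i j, i < r → j < r → x j (r + (i + 1)) + x i (r + (j + 1)) = 0 := by
    intro i j hi hj
    have := eB (r + (i + 1)) (r + (j + 1)) (by omega) (by omega)
    rwa [if_neg (by omega), if_pos (by omega), if_neg (by omega), if_pos (by omega),
      Nat.add_sub_cancel_left, Nat.add_sub_cancel_left, Nat.add_sub_cancel,
      Nat.add_sub_cancel] at this
  have Q2' : ∀ i, i < r → x i (r + 0) = 0 := by
    intro i hi
    have := eB (r + (i + 1)) r (by omega) (by omega)
    rwa [if_neg (by omega), if_neg (by omega), if_neg (by omega), if_pos (by omega),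
      Nat.add_sub_cancel_left, Nat.add_sub_cancel, zero_add] at this
  have QH : ∀ i j, i + 1 < r → j < r → x i (r + (j + 1)) = x (i + 1) (r + j) := by
    intro i j hi hj
    have h1 := Q2 i j (by omega) hj
    have h2 := Q1 (i + 1) j hi hj
    linear_combination h1 - h2
  have Qlow : ∀ j i, i + j < r → x i (r + j) = 0 := by
    intro j
    induction j with
    | zero => intro i hi; exact Q2' i (by omega)
    | succ j ih =>
      intro i hi
      rw [QH i j (by omega) (by omega)]
      exact ih (i + 1) (by omega)
  have Qhigh : ∀ k i j, j + k = r → i < r → k ≤ i → x i (r + j) = 0 := by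
    intro k
    induction k with
    | zero => intro i j h hi _; obtain rfl : j = r := by omega
              exact Q1' i hi
    | succ k ih =>
      intro i j h hi hk
      obtain ⟨i, rfl⟩ : ∃ n, i = n + 1 := ⟨i - 1, by omega⟩
      rw [← QH i j (by omega) (by omega)]
      exact ih i (j + 1) (by omega) (by omega) (by omega)
  have Q0 : ∀ i j, i < r → j ≤ r → x i (r + j) = 0 := by
    intro i j hi hj
    rcases lt_or_ge (i + j) r with h | h
    · exact Qlow j i h
    · exact Qhigh (r - j) i j (by omega) hi (by omega)
  -- blocks P, S
  have S1 : ∀ i j, i < r → j < r → x j i + x (r + i) (r + j) = 0 := by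
    intro i j hi hj
    have := eA i (r + j) (by omega) (by omega)
    rwa [if_neg (by omega), if_pos (by omega), if_pos (by omega),
      Nat.add_sub_cancel_left, add_comm i] at this
  have S1' : ∀ i, i < r → x (r + i) (r + r) = 0 := by
    intro i hi
    have := eA i (r + r) (by omega) (by omega)
    rwa [if_neg (by omega), if_neg (by omega), if_pos (by omega), zero_add, add_comm i] at this
  have S2 : ∀ i j, i < r → j < r → x j i + x (r + (i + 1)) (r + (j + 1)) = 0 := by
    intro i j hi hj
    have := eB i (r + (j + 1)) (by omega) (by omega)
    rwa [if_neg (by omega), if_pos (by omega), if_pos (by omega),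
      Nat.add_sub_cancel_left, Nat.add_sub_cancel, add_comm i, add_assoc] at this
  have S2' : ∀ i, i < r → x (r + (i + 1)) (r + 0) = 0 := by
    intro i hi
    have := eB i r (by omega) (by omega)
    rwa [if_neg (by omega), if_neg (by omega), if_pos (by omega), zero_add, add_comm i,
      add_assoc] at this
  have ST : ∀ i j, i < r → j < r → x (r + i) (r + j) = x (r + (i + 1)) (r + (j + 1)) := by
    intro i j hi hj
    linear_combination S1 i j hi hj - S2 i j hi hj
  have Sdown : ∀ j i, i ≤ r → j ≤ i → x (r + i) (r + j) = 0 := by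
    intro j
    induction j with
    | zero =>
      intro i hi _
      rcases i with _ | i
      · exact h00
      · exact S2' i (by omega)
    | succ j ih =>
      intro i hi hj
      obtain ⟨i, rfl⟩ : ∃ n, i = n + 1 := ⟨i - 1, by omega⟩
      rw [← ST i j (by omega) (by omega)]
      exact ih i (by omega) (by omega)
  have Sup : ∀ k i j, j + k = r → i < j → x (r + i) (r + j) = 0 := by
    intro k
    induction k with
    | zero => intro i j h hi; obtain rfl : j = r := by omega
              exact S1' i hi
    | succ k ih =>
      intro i j h hi
      rw [ST i j (by omega) (by omega)]
      exact ih (i + 1) (j + 1) (by omega) (by omega)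
  have S0 : ∀ i j, i ≤ r → j ≤ r → x (r + i) (r + j) = 0 := by
    intro i j hi hj
    rcases lt_or_ge i j with h | h
    · exact Sup (r - j) i j (by omega) h
    · exact Sdown j i hi h
  have P0 : ∀ i j, i < r → j < r → x i j = 0 := by
    intro i j hi hj
    have := S1 j i hj hi
    rwa [S0 j i (by omega) (by omega), add_zero] at this
  ext ⟨p, hp⟩ ⟨q, hq⟩
  rw [hx]
  change x p q = 0
  rcases lt_or_ge p r with h1 | h1 <;> rcases lt_or_ge q r with h2 | h2
  · exact P0 p q h1 h2
  · obtain ⟨q, rfl⟩ := Nat.exists_eq_add_of_le h2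
    exact Q0 p q h1 (by omega)
  · obtain ⟨p, rfl⟩ := Nat.exists_eq_add_of_le h1
    exact R0 p q (by omega) h2
  · obtain ⟨p, rfl⟩ := Nat.exists_eq_add_of_le h1
    obtain ⟨q, rfl⟩ := Nat.exists_eq_add_of_le h2
    exact S0 p q (by omega) (by omega)

theorem cSol_lin (r : ℕ) (v w : Fin 5 → ℂ) (k : ℂ) (p q : ℕ) :
    cSol r (k * v 0 + w 0) (k * v 1 + w 1) (k * v 2 + w 2) (k * v 3 + w 3) (k * v 4 + w 4) p q =
    k * cSol r (v 0) (v 1) (v 2) (v 3) (v 4) p q + cSol r (w 0) (w 1) (w 2) (w 3) (w 4) p q := by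
  unfold cSol
  split_ifs <;> ring

/-- The explicit solution as a linear map. -/
noncomputable def cMap (r : ℕ) :
    (Fin 5 → ℂ) →ₗ[ℂ] Matrix (Fin (2 * r + 1)) (Fin (2 * r + 1)) ℂ where
  toFun v := Matrix.of fun p q => cSol r (v 0) (v 1) (v 2) (v 3) (v 4) p q
  map_add' v w := by
    ext p q
    have := cSol_lin r v w 1 p q
    simpa using this
  map_smul' k v := by
    ext p q
    have := cSol_lin r v 0 k p q
    have h0 : cSol r 0 0 0 0 0 p q = 0 := by simp [cSol]
    simpa [h0] using this

theorem cIndep (r : ℕ) (hr : 1 ≤ r) (a b : ℂ) (h : a • corankOneA r + b • corankOneB r = 0) :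
    a = 0 ∧ b = 0 := by
  have h1 := congrFun (congrFun h ⟨0, by omega⟩) ⟨r, by omega⟩
  have h2 := congrFun (congrFun h ⟨0, by omega⟩) ⟨r + 1, by omega⟩
  have hr' : 0 < r := hr
  have hr'' : r ≠ 0 := by omega
  simp [corankOneA, corankOneB, hr', hr''] at h1 h2
  exact ⟨h1, h2⟩

theorem cMap_inj (r : ℕ) (hr : 1 ≤ r) : Function.Injective (cMap r) := by
  rw [← LinearMap.ker_eq_bot, LinearMap.ker_eq_bot']
  intro v hv
  have h1 := cSol_A r (v 0) (v 1) (v 2) (v 3) (v 4)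
  have h2 := cSol_B r (v 0) (v 1) (v 2) (v 3) (v 4)
  have h3 := congrFun (congrFun hv ⟨r, by omega⟩) ⟨r, by omega⟩
  change congrDeriv _ (cMap r v) = _ at h1 h2
  rw [hv, map_zero] at h1 h2
  obtain ⟨e0, e1⟩ := cIndep r hr _ _ h1.symm
  obtain ⟨e2, e3⟩ := cIndep r hr _ _ h2.symm
  have e4 : v 4 = 0 := by
    simpa [cMap, cSol] using h3
  ext i
  fin_cases i <;> assumption

theorem cMap_range (r : ℕ) (hr : 1 ≤ r) :
    LinearMap.range (cMap r) = stabAlg (corankOneA r) (corankOneB r) := by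
  apply le_antisymm
  · rintro _ ⟨v, rfl⟩
    refine ⟨?_, ?_⟩
    · exact Submodule.mem_span_pair.mpr ⟨_, _, (cSol_A r (v 0) (v 1) (v 2) (v 3) (v 4)).symm⟩
    · exact Submodule.mem_span_pair.mpr ⟨_, _, (cSol_B r (v 0) (v 1) (v 2) (v 3) (v 4)).symm⟩
  · rintro X ⟨hA, hB⟩
    obtain ⟨a, b, hA⟩ := Submodule.mem_span_pair.mp hA
    obtain ⟨c, d, hB⟩ := Submodule.mem_span_pair.mp hB
    set s := X ⟨r, by omega⟩ ⟨r, by omega⟩ with hs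
    have h1 : congrDeriv _ (cMap r ![a, b, c, d, s]) = _ := cSol_A r a b c d s
    have h2 : congrDeriv _ (cMap r ![a, b, c, d, s]) = _ := cSol_B r a b c d s
    have h3 : cMap r ![a, b, c, d, s] ⟨r, by omega⟩ ⟨r, by omega⟩ = s := by
      simp [cMap, cSol]
    refine ⟨![a, b, c, d, s], ?_⟩
    rw [← sub_eq_zero]
    apply cKer r hr
    · rw [map_sub, h1, hA, sub_self]
    · rw [map_sub, h2, hB, sub_self]
    · rw [Matrix.sub_apply, h3, sub_self]

/-- The Lie algebra of the stabilizer of the corank-one canonical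
pencil of size `2r + 1` has dimension `5` over ℂ. -/
theorem corankOne_stabilizer_dim_five (r : ℕ) (hr : 1 ≤ r) :
    Module.finrank ℂ (stabAlg (corankOneA r) (corankOneB r)) = 5 := by
  rw [← cMap_range r hr, LinearMap.finrank_range_of_inj (cMap_inj r hr)]
  simp
end
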